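/- arXiv:math/0404348 — 8 statements merged into one kernel-verified Lean document; each statement's English description precedes it below -/
import Mathlib

section
/- For any k-tensor T on ℝ^n, any n×n matrices H₁,…,H_k, any orthogonal n×n matrix V, and any permutation σ on {1,…,k}, the identity ⟨T, (VᵀH₁V) ∘_σ ⋯ ∘_σ (VᵀH_kV)⟩ = (V(Diag^σ T)Vᵀ)[H₁,…,H_k] holds. -/
open scoped BigOperators
open Filter Asymptotics Matrix

attribute [local instance] Matrix.normedAddCommGroup

noncomputable section

/-- A `k`-tensor on `ℝ^n`, identified with its array of entries. -/
abbrev Tensor (k n : ℕ) : Type := (Fin k → Fin n) → ℝ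

/-- A `2k`-tensor on `ℝ^n`, with its indices grouped into two groups of `k`. -/
abbrev Tensor2 (k n : ℕ) : Type := (Fin k → Fin n) → (Fin k → Fin n) → ℝ

/-- The `σ`-Hadamard product of `k` matrices:
`(H₁ ∘_σ ⋯ ∘_σ H_k)^{i₁…i_k} = ∏ s, H_s^{i_s i_{σ⁻¹(s)}}`. -/
def hadamardProd {k n : ℕ} (σ : Equiv.Perm (Fin k))
    (H : Fin k → Matrix (Fin n) (Fin n) ℝ) : Tensor k n :=
  fun i => ∏ s, H s (i s) (i (σ⁻¹ s))

/-- The dot product of two `k`-tensors. -/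
def tdot {k n : ℕ} (T₁ T₂ : Tensor k n) : ℝ :=
  ∑ p : Fin k → Fin n, T₁ p * T₂ p

/-- `Diag^σ T`, the `2k`-tensor equal to `T^{i₁…i_k}` when `i_s = j_{σ(s)}` for all `s`,
and `0` otherwise. -/
def diagPerm {k n : ℕ} (σ : Equiv.Perm (Fin k)) (T : Tensor k n) : Tensor2 k n :=
  fun i j => if ∀ s, i s = j (σ s) then T i else 0

/-- A `2k`-tensor viewed as a `k`-tensor on matrix arguments:
`S[H₁,…,H_k] = ∑_{p,q} S^{p₁…p_k}_{q₁…q_k} ∏ s, H_s^{p_s q_s}`. -/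
def apply2 {k n : ℕ} (S : Tensor2 k n)
    (H : Fin k → Matrix (Fin n) (Fin n) ℝ) : ℝ :=
  ∑ p : Fin k → Fin n, ∑ q : Fin k → Fin n, S p q * ∏ s, H s (p s) (q s)

/-- Conjugation `U S Uᵀ` of a `2k`-tensor `S` by a matrix `U`. -/
def conj2 {k n : ℕ} (U : Matrix (Fin n) (Fin n) ℝ) (S : Tensor2 k n) : Tensor2 k n :=
  fun i j => ∑ p : Fin k → Fin n, ∑ q : Fin k → Fin n,
    S p q * ((∏ s, U (i s) (p s)) * ∏ s, U (j s) (q s))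

/-- For a `2(k+1)`-tensor `S` viewed as a `(k+1)`-tensor on matrices, `S[H]` fixes the last
matrix argument to `H`, producing a `2k`-tensor. -/
def lastApply {k n : ℕ} (S : Tensor2 (k+1) n)
    (H : Matrix (Fin n) (Fin n) ℝ) : Tensor2 k n :=
  fun i j => ∑ a : Fin n, ∑ b : Fin n, S (Fin.snoc i a) (Fin.snoc j b) * H a b

/-- `T[x]`: contraction of the last index of a `(k+1)`-tensor against a vector. -/
def contract {k n : ℕ} (T : Tensor (k+1) n) (x : Fin n → ℝ) : Tensor k n :=
  fun i => ∑ a : Fin n, T (Fin.snoc i a) * x a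

/-- A permutation `σ` of `{1,…,k}` viewed as a permutation of `{1,…,k+1}` fixing `k+1`. -/
def extPerm {k : ℕ} (σ : Equiv.Perm (Fin k)) : Equiv.Perm (Fin (k+1)) :=
  (Equiv.permCongr finSuccEquivLast).symm σ.optionCongr

/-- `σ_{(l)} := σ ∘ τ_l`, where `τ_l` is the transposition `(l, k+1)` (and `σ` fixes `k+1`).
Here `l : Fin (k+1)`; taking `l = Fin.last k` gives `σ_{(k+1)} = σ`. -/
def permIns {k : ℕ} (σ : Equiv.Perm (Fin k)) (l : Fin (k+1)) : Equiv.Perm (Fin (k+1)) :=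
  extPerm σ * Equiv.swap l (Fin.last k)

/-- A tensor is `μ`-block-constant if its entries agree on componentwise `μ`-equivalent
multi-indices (`i ∼ j` iff `μ i = μ j`). -/
def BlockConstant {k n : ℕ} (μ : Fin n → ℝ) (T : Tensor k n) : Prop :=
  ∀ i j : Fin k → Fin n, (∀ s, μ (i s) = μ (j s)) → T i = T j

/-- `H_in`: the diagonal-block part of `H` (w.r.t. the blocks of `μ`). -/
def matIn {n : ℕ} (μ : Fin n → ℝ) (H : Matrix (Fin n) (Fin n) ℝ) :
    Matrix (Fin n) (Fin n) ℝ :=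
  Matrix.of fun i j => if μ i = μ j then H i j else 0

/-- `H_out = H - H_in`: the off-diagonal-block part of `H`. -/
def matOut {n : ℕ} (μ : Fin n → ℝ) (H : Matrix (Fin n) (Fin n) ℝ) :
    Matrix (Fin n) (Fin n) ℝ :=
  H - matIn μ H

/-- The divided-difference tensor `T^{(l)}_out` of a `k`-tensor `T`, a `(k+1)`-tensor. -/
def outDD {k n : ℕ} (μ : Fin n → ℝ) (T : Tensor k n) (l : Fin k) : Tensor (k+1) n :=
  fun i => if μ (i l.castSucc) = μ (i (Fin.last k)) then 0
    else (T (Function.update (fun s => i s.castSucc) l (i (Fin.last k)))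
          - T (fun s => i s.castSucc)) / (μ (i (Fin.last k)) - μ (i l.castSucc))

/-- `T^{τ_l}`: the `(k+1)`-tensor equal to `T^{i₁…i_k}` on the hyperplane `i_l = i_{k+1}`
and `0` elsewhere. -/
def liftTau {k n : ℕ} (T : Tensor k n) (l : Fin k) : Tensor (k+1) n :=
  fun i => if i l.castSucc = i (Fin.last k) then T (fun s => i s.castSucc) else 0

/-- `T^{τ_l}_in`: the "inflated" `(k+1)`-tensor, equal to
`T^{i₁…i_{l-1} i_{k+1} i_{l+1}…i_k}` when `μ_{i_l} = μ_{i_{k+1}}` and `0` otherwise. -/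
def liftTauIn {k n : ℕ} (μ : Fin n → ℝ) (T : Tensor k n) (l : Fin k) : Tensor (k+1) n :=
  fun i => if μ (i l.castSucc) = μ (i (Fin.last k))
    then T (Function.update (fun s => i s.castSucc) l (i (Fin.last k))) else 0

/-- `lam` is the map sending each symmetric matrix to the vector of its eigenvalues
ordered nonincreasingly: it is nonincreasing and realized by an orthogonal
diagonalization. -/
def IsEigCF {n : ℕ} (lam : Matrix (Fin n) (Fin n) ℝ → Fin n → ℝ) : Prop :=
  ∀ A : Matrix (Fin n) (Fin n) ℝ, A.IsSymm →
    Antitone (lam A) ∧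
    ∃ U : Matrix (Fin n) (Fin n) ℝ, Uᵀ * U = 1 ∧
      A = U * Matrix.diagonal (lam A) * Uᵀ

/-- `h` is the concatenated vector `(λ(X₁ᵀ A X₁), …, λ(X_rᵀ A X_r))` of the nonincreasingly
ordered eigenvalues of the diagonal blocks of `A` (blocks determined by `μ`):
equivalently, `h` is nonincreasing within each block of `μ` and `Diag h` is obtained from
`A_in` by conjugating with a block-diagonal orthogonal matrix. -/
def IsBlockEig {n : ℕ} (μ : Fin n → ℝ) (A : Matrix (Fin n) (Fin n) ℝ)
    (h : Fin n → ℝ) : Prop :=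
  (∀ i j : Fin n, i ≤ j → μ i = μ j → h j ≤ h i) ∧
  ∃ V : Matrix (Fin n) (Fin n) ℝ, Vᵀ * V = 1 ∧
    (∀ i j, μ i ≠ μ j → V i j = 0) ∧
    Vᵀ * matIn μ A * V = Matrix.diagonal h

/-- Theorem `jen3a`. For any `k`-tensor `T`, matrices `H₁,…,H_k`,
orthogonal `V`, and permutation `σ` of `{1,…,k}`:
`⟨T, (VᵀH₁V) ∘_σ ⋯ ∘_σ (VᵀH_kV)⟩ = (V(Diag^σ T)Vᵀ)[H₁,…,H_k]`. -/
theorem statement2 {n k : ℕ} (T : Tensor k n)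
    (H : Fin k → Matrix (Fin n) (Fin n) ℝ)
    (V : Matrix (Fin n) (Fin n) ℝ) (hV : Vᵀ * V = 1)
    (σ : Equiv.Perm (Fin k)) :
    tdot T (hadamardProd σ (fun s => Vᵀ * H s * V))
      = apply2 (conj2 V (diagPerm σ T)) H := by
  have hd : ∀ p q : Fin k → Fin n, conj2 V (diagPerm σ T) p q
      = ∑ i : Fin k → Fin n, T i * ((∏ s, V (p s) (i s)) * ∏ s, V (q s) (i (σ⁻¹ s))) := by
    intro p q
    unfold conj2 diagPerm
    refine Finset.sum_congr rfl fun i _ => ?_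
    rw [Finset.sum_eq_single (fun s => i (σ⁻¹ s))]
    · simp
    · intro j _ hj
      rw [if_neg, zero_mul]
      intro h
      apply hj
      funext s
      rw [h]
      simp
    · simp
  have hp : ∀ i : Fin k → Fin n, hadamardProd σ (fun s => Vᵀ * H s * V) i
      = ∑ p : Fin k → Fin n, ∑ q : Fin k → Fin n,
        ((∏ s, V (p s) (i s)) * ∏ s, V (q s) (i (σ⁻¹ s))) * ∏ s, H s (p s) (q s) := by
    intro i
    have h1 : ∀ s, (Vᵀ * H s * V) (i s) (i (σ⁻¹ s))
        = ∑ a, ∑ b, V a (i s) * V b (i (σ⁻¹ s)) * H s a b := by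
      intro s
      simp only [Matrix.mul_apply, Matrix.transpose_apply, Finset.sum_mul]
      rw [Finset.sum_comm]
      refine Finset.sum_congr rfl fun a _ => Finset.sum_congr rfl fun b _ => ?_
      ring
    unfold hadamardProd
    simp only [h1]
    rw [Finset.prod_univ_sum, Fintype.piFinset_univ]
    refine Finset.sum_congr rfl fun p _ => ?_
    rw [Finset.prod_univ_sum, Fintype.piFinset_univ]
    refine Finset.sum_congr rfl fun q _ => ?_
    simp only [Finset.prod_mul_distrib]
  unfold tdot apply2
  simp only [hd, hp, Finset.mul_sum, Finset.sum_mul]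
  rw [Finset.sum_comm]
  refine Finset.sum_congr rfl fun p _ => ?_
  rw [Finset.sum_comm]
  refine Finset.sum_congr rfl fun q _ => Finset.sum_congr rfl fun i _ => ?_
  ring

end
end

section
/- Let μ ∈ ℝ^n with μ₁ ≥ μ₂ ≥ … ≥ μ_n, and let I₁,…,I_r be the blocks of consecutive indices on which μ is constant. For l = 1,…,r let X_l be the n×|I_l| matrix whose columns are the standard basis vectors e^i for i ∈ I_l. Then for any sequence of n×n symmetric matrices M_m → 0, λ(Diag μ + M_m) = μ + (λ(X₁ᵀM_mX₁), …, λ(X_rᵀM_mX_r)) + o(‖M_m‖), where λ(·) denotes the vector of eigenvalues of a symmetric matrix ordered nonincreasingly and Diag μ is the diagonal matrix with μ on its diagonal. -/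
open scoped BigOperators
open Filter Asymptotics Matrix

attribute [local instance] Matrix.normedAddCommGroup

noncomputable section

/-- A dimension count. -/
lemma aux_dim {n : ℕ} (W : Matrix (Fin n) (Fin n) ℝ) (S T : Finset (Fin n))
    (hc : S.card + T.card < n) :
    ∃ x : Fin n → ℝ, x ≠ 0 ∧ (∀ j ∈ S, x j = 0) ∧ (∀ k ∈ T, (Wᵀ *ᵥ x) k = 0) := by
  let f : (Fin n → ℝ) →ₗ[ℝ] ((S → ℝ) × (T → ℝ)) :=
    LinearMap.prod (LinearMap.funLeft ℝ ℝ (fun j : S => (j : Fin n)))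
      ((LinearMap.funLeft ℝ ℝ (fun j : T => (j : Fin n))).comp (Matrix.mulVecLin Wᵀ))
  have hk : LinearMap.ker f ≠ ⊥ := by
    apply LinearMap.ker_ne_bot_of_finrank_lt
    simpa using hc
  obtain ⟨x, hx, hx0⟩ := (Submodule.ne_bot_iff _).1 hk
  refine ⟨x, hx0, ?_, ?_⟩
  · intro j hj
    have := congrFun (congrArg Prod.fst (LinearMap.mem_ker.1 hx)) ⟨j, hj⟩
    simpa [f] using this
  · intro k hk
    have := congrFun (congrArg Prod.snd (LinearMap.mem_ker.1 hx)) ⟨k, hk⟩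
    exact this

lemma aux_amgm (a w w' x y : ℝ) (hw : 0 ≤ w) (hw' : 0 ≤ w') (h : a ^ 2 ≤ w * w') :
    a * x * y ≤ w * x ^ 2 + w' * y ^ 2 := by
  have h1 : |a| ≤ √w * √w' := by
    rw [← Real.sqrt_mul hw]
    exact Real.abs_le_sqrt h
  have h2 : a * x * y ≤ |a| * (|x| * |y|) := by
    rw [mul_assoc, ← abs_mul, ← abs_mul]; exact le_abs_self _
  have h3 : |a| * (|x| * |y|) ≤ (√w * √w') * (|x| * |y|) :=
    mul_le_mul_of_nonneg_right h1 (by positivity)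
  have h4 := Real.sq_sqrt hw
  have h5 := Real.sq_sqrt hw'
  have h6 : (√w * |x|) ^ 2 = w * x ^ 2 := by rw [mul_pow, h4, sq_abs]
  have h7 : (√w' * |y|) ^ 2 = w' * y ^ 2 := by rw [mul_pow, h5, sq_abs]
  nlinarith [sq_nonneg (√w * |x| - √w' * |y|), sq_nonneg (√w * |x|), sq_nonneg (√w' * |y|)]

lemma aux_core {n : ℕ} (μ h lam : Fin n → ℝ) (N W : Matrix (Fin n) (Fin n) ℝ)
    (hW : W * Wᵀ = 1)
    (hB : Matrix.diagonal (μ + h) + N = W * Matrix.diagonal lam * Wᵀ)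
    (g δ s : ℝ) (hδ : 0 ≤ δ) (hs : 0 < s) (hδs : δ ≤ s) (hsg : 2 * n * s + 2 * δ ≤ g)
    (hN0 : ∀ j k, μ j = μ k → N j k = 0) (hN : ∀ j k, |N j k| ≤ δ) (hh : ∀ j, |h j| ≤ δ)
    (i : Fin n) (S T : Finset (Fin n)) (hc : S.card + T.card < n)
    (hS : ∀ j, j ∉ S → (μ j = μ i ∧ h j ≤ h i) ∨ (μ j ≠ μ i ∧ μ j + g ≤ μ i))
    (hT : ∀ k, k ∉ T → lam i ≤ lam k) :
    lam i ≤ μ i + h i + 2 * n * (δ ^ 2 / s) := by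
  obtain ⟨x, hx0, hxS, hxT⟩ := aux_dim W S T hc
  set y := Wᵀ *ᵥ x with hy
  have hpos : 0 < ∑ j, x j ^ 2 := by
    obtain ⟨j, hj⟩ := Function.ne_iff.1 hx0
    exact Finset.sum_pos' (fun _ _ => sq_nonneg _) ⟨j, Finset.mem_univ _, by
      have : x j ≠ 0 := hj
      positivity⟩
  have hnorm : ∑ k, y k ^ 2 = ∑ j, x j ^ 2 := by
    have : y ⬝ᵥ y = x ⬝ᵥ x := by
      rw [hy, Matrix.dotProduct_mulVec, Matrix.vecMul_transpose, Matrix.mulVec_mulVec, hW,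
        Matrix.one_mulVec]
    simpa [dotProduct, sq] using this
  have hq : x ⬝ᵥ ((Matrix.diagonal (μ + h) + N) *ᵥ x) = ∑ k, lam k * y k ^ 2 := by
    rw [hB, ← Matrix.mulVec_mulVec, ← Matrix.mulVec_mulVec, Matrix.dotProduct_mulVec,
      ← Matrix.mulVec_transpose, ← hy]
    simp only [dotProduct, Matrix.mulVec_diagonal]
    exact Finset.sum_congr rfl fun k _ => by ring
  have hq2 : x ⬝ᵥ ((Matrix.diagonal (μ + h) + N) *ᵥ x)
      = ∑ j, (μ j + h j) * x j ^ 2 + ∑ j, ∑ k, N j k * x j * x k := by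
    rw [Matrix.add_mulVec, dotProduct_add]
    congr 1
    · simp only [dotProduct, Matrix.mulVec_diagonal, Pi.add_apply]
      exact Finset.sum_congr rfl fun k _ => by ring
    · simp only [dotProduct, Matrix.mulVec, Finset.mul_sum]
      exact Finset.sum_congr rfl fun k _ => Finset.sum_congr rfl fun l _ => by ring
  have hlow : lam i * ∑ j, x j ^ 2 ≤ ∑ k, lam k * y k ^ 2 := by
    rw [← hnorm, Finset.mul_sum]
    refine Finset.sum_le_sum fun k _ => ?_
    by_cases hk : k ∈ T
    · simp [hxT k hk]
    · exact mul_le_mul_of_nonneg_right (hT k hk) (sq_nonneg _)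
  let w : Fin n → ℝ := fun j => if μ j = μ i then δ ^ 2 / s else s
  have hw : ∀ j, 0 ≤ w j := by
    intro j; simp only [w]; split_ifs <;> positivity
  have hcross : ∀ j k, N j k * x j * x k ≤ w j * x j ^ 2 + w k * x k ^ 2 := by
    intro j k
    apply aux_amgm _ _ _ _ _ (hw j) (hw k)
    by_cases hjk : μ j = μ k
    · rw [hN0 j k hjk]
      have := mul_nonneg (hw j) (hw k)
      simpa using this
    · have h1 : N j k ^ 2 ≤ δ ^ 2 := sq_le_sq' (abs_le.1 (hN j k)).1 (abs_le.1 (hN j k)).2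
      refine h1.trans ?_
      simp only [w]
      split_ifs with ha hb hb
      · exact absurd (ha.trans hb.symm) hjk
      · rw [div_mul_cancel₀ _ hs.ne']
      · rw [mul_div_cancel₀ _ hs.ne']
      · nlinarith
  have hup : ∑ j, ∑ k, N j k * x j * x k ≤ ∑ j, 2 * n * w j * x j ^ 2 := by
    calc _ ≤ ∑ j, ∑ k, (w j * x j ^ 2 + w k * x k ^ 2) :=
          Finset.sum_le_sum fun j _ => Finset.sum_le_sum fun k _ => hcross j k
      _ = _ := by
          simp only [Finset.sum_add_distrib, Finset.sum_const, Finset.card_univ, Fintype.card_fin,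
            nsmul_eq_mul, ← Finset.mul_sum, mul_assoc]
          ring
  have hfin : ∑ j, (μ j + h j) * x j ^ 2 + ∑ j, 2 * n * w j * x j ^ 2
      ≤ (μ i + h i + 2 * n * (δ ^ 2 / s)) * ∑ j, x j ^ 2 := by
    rw [← Finset.sum_add_distrib, Finset.mul_sum]
    refine Finset.sum_le_sum fun j _ => ?_
    by_cases hj : j ∈ S
    · simp [hxS j hj]
    · rw [← add_mul]
      apply mul_le_mul_of_nonneg_right _ (sq_nonneg _)
      have hp : 0 ≤ 2 * n * (δ ^ 2 / s) := by positivity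
      rcases hS j hj with ⟨h1, h2⟩ | ⟨h1, h2⟩
      · simp only [w, if_pos h1]; linarith
      · simp only [w, if_neg h1]
        have := abs_le.1 (hh j)
        have := abs_le.1 (hh i)
        linarith
  have : lam i * ∑ j, x j ^ 2 ≤ (μ i + h i + 2 * n * (δ ^ 2 / s)) * ∑ j, x j ^ 2 := by
    linarith
  exact le_of_mul_le_mul_right this hpos

lemma aux_entry {n : ℕ} (V P : Matrix (Fin n) (Fin n) ℝ) (hV : Vᵀ * V = 1) (ε : ℝ)
    (hP : ∀ a b, |P a b| ≤ ε) (j k : Fin n) : |(Vᵀ * P * V) j k| ≤ n ^ 2 * ε := by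
  have hV1 : ∀ a b, |V a b| ≤ 1 := by
    intro a b
    have h1 : ∑ c, V c b ^ 2 = 1 := by
      have := congrFun (congrFun hV b) b
      simpa [Matrix.mul_apply, sq] using this
    have h2 : V a b ^ 2 ≤ 1 := by
      rw [← h1]
      exact Finset.single_le_sum (f := fun c => V c b ^ 2) (fun c _ => sq_nonneg _)
        (Finset.mem_univ a)
    exact (sq_le_one_iff_abs_le_one _).1 h2
  have hε : 0 ≤ ε := (abs_nonneg _).trans (hP j k)
  simp only [Matrix.mul_apply, Matrix.transpose_apply]
  calc |∑ b, (∑ a, V a j * P a b) * V b k| ≤ ∑ b, |(∑ a, V a j * P a b) * V b k| :=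
        Finset.abs_sum_le_sum_abs _ _
    _ ≤ ∑ b : Fin n, n * ε := by
        refine Finset.sum_le_sum fun b _ => ?_
        rw [abs_mul]
        have h1 : |∑ a, V a j * P a b| ≤ n * ε := by
          calc _ ≤ ∑ a, |V a j * P a b| := Finset.abs_sum_le_sum_abs _ _
            _ ≤ ∑ a : Fin n, ε := by
                refine Finset.sum_le_sum fun a _ => ?_
                rw [abs_mul]
                nlinarith [hV1 a j, hP a b, abs_nonneg (V a j), abs_nonneg (P a b)]
            _ = n * ε := by simp
        nlinarith [hV1 b k, abs_nonneg (V b k), abs_nonneg (∑ a, V a j * P a b)]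
    _ = n ^ 2 * ε := by simp; ring

lemma aux_gap {n : ℕ} (μ : Fin n → ℝ) :
    ∃ g > 0, ∀ i j, μ i ≠ μ j → g ≤ |μ i - μ j| := by
  have h1 : ∀ᶠ g in nhdsWithin (0 : ℝ) (Set.Ioi 0), ∀ i j, μ i ≠ μ j → g ≤ |μ i - μ j| := by
    rw [eventually_all]; intro i
    rw [eventually_all]; intro j
    by_cases hij : μ i = μ j
    · simp [hij]
    · have : 0 < |μ i - μ j| := abs_pos.2 (sub_ne_zero.2 hij)
      filter_upwards [Ioo_mem_nhdsGT this] with g hg _ using hg.2.le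
  obtain ⟨g, hg, hg'⟩ := (h1.and self_mem_nhdsWithin).exists
  exact ⟨g, hg', hg⟩

lemma aux_main {n : ℕ} (μ : Fin n → ℝ) (hμ : Antitone μ)
    (lam : Fin n → ℝ) (hlam : Antitone lam) (U M : Matrix (Fin n) (Fin n) ℝ)
    (hU : Uᵀ * U = 1) (hA : Matrix.diagonal μ + M = U * Matrix.diagonal lam * Uᵀ)
    (h : Fin n → ℝ) (hh : IsBlockEig μ M h) (g s : ℝ) (hs : 0 < s)
    (hg : ∀ i j, μ i ≠ μ j → g ≤ |μ i - μ j|)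
    (hδs : n ^ 2 * ‖M‖ ≤ s) (hsg : 2 * n * s + 2 * (n ^ 2 * ‖M‖) ≤ g) (i : Fin n) :
    |lam i - (μ i + h i)| ≤ 2 * n * ((n ^ 2 * ‖M‖) ^ 2 / s) := by
  obtain ⟨hord, V, hV, hV0, hVh⟩ := hh
  set δ : ℝ := n ^ 2 * ‖M‖ with hδdef
  have hδ : 0 ≤ δ := by positivity
  have hV' : V * Vᵀ = 1 := mul_eq_one_comm.1 hV
  have hU' : U * Uᵀ = 1 := mul_eq_one_comm.1 hU
  have hVμ : Vᵀ * Matrix.diagonal μ * V = Matrix.diagonal μ := by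
    have : Matrix.diagonal μ * V = V * Matrix.diagonal μ := by
      ext a b
      rw [Matrix.diagonal_mul, Matrix.mul_diagonal]
      by_cases hab : μ a = μ b
      · rw [hab, mul_comm]
      · simp [hV0 a b hab]
    rw [Matrix.mul_assoc, this, ← Matrix.mul_assoc, hV, Matrix.one_mul]
  set N : Matrix (Fin n) (Fin n) ℝ := Vᵀ * (M - matIn μ M) * V with hNdef
  set W : Matrix (Fin n) (Fin n) ℝ := Vᵀ * U with hWdef
  have hW : W * Wᵀ = 1 := by
    rw [hWdef, Matrix.transpose_mul, Matrix.transpose_transpose, Matrix.mul_assoc,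
      ← Matrix.mul_assoc U, hU', Matrix.one_mul, hV]
  have hB : Matrix.diagonal (μ + h) + N = W * Matrix.diagonal lam * Wᵀ := by
    have h1 : W * Matrix.diagonal lam * Wᵀ = Vᵀ * (Matrix.diagonal μ + M) * V := by
      rw [hA, hWdef, Matrix.transpose_mul, Matrix.transpose_transpose]
      simp only [Matrix.mul_assoc]
    have h2 : Matrix.diagonal (μ + h) = Matrix.diagonal μ + Matrix.diagonal h := by
      rw [Matrix.diagonal_add]; rfl
    rw [h1, h2, ← hVh, hNdef, Matrix.mul_add, Matrix.add_mul, hVμ, Matrix.mul_sub, Matrix.sub_mul]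
    abel
  have hMe : ∀ a b, |M a b| ≤ ‖M‖ := fun a b => by
    simpa using Matrix.norm_entry_le_entrywise_sup_norm M (i := a) (j := b)
  have hh' : ∀ j, |h j| ≤ δ := by
    intro j
    have h1 := aux_entry V (matIn μ M) hV ‖M‖ (fun a b => by
      simp only [matIn, Matrix.of_apply]; split_ifs
      · exact hMe a b
      · simp) j j
    rwa [hVh, Matrix.diagonal_apply_eq] at h1
  have hN : ∀ j k, |N j k| ≤ δ := by
    intro j k
    exact aux_entry V _ hV ‖M‖ (fun a b => by
      simp only [matIn, Matrix.of_apply, Matrix.sub_apply]; split_ifs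
      · simp
      · simpa using hMe a b) j k
  have hN0 : ∀ j k, μ j = μ k → N j k = 0 := by
    intro j k hjk
    simp only [hNdef, Matrix.mul_apply, Matrix.transpose_apply]
    refine Finset.sum_eq_zero fun b _ => ?_
    by_cases hb : μ b = μ k
    · rw [Finset.sum_eq_zero, zero_mul]
      intro a _
      by_cases ha : μ a = μ j
      · have : μ a = μ b := by rw [ha, hjk, hb]
        simp [matIn, this]
      · simp [hV0 a j ha]
    · simp [hV0 b k hb]
  rw [abs_le]
  have hi := i.isLt
  constructor
  · have hB' : Matrix.diagonal (-μ + -h) + -N = W * Matrix.diagonal (-lam) * Wᵀ := by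
      have e1 : Matrix.diagonal (-μ + -h) = -Matrix.diagonal (μ + h) := by
        rw [Matrix.diagonal_neg]; congr 1; ext; simp; ring
      have e2 : Matrix.diagonal (-lam) = -Matrix.diagonal lam := by
        rw [Matrix.diagonal_neg]; rfl
      rw [e1, e2, Matrix.mul_neg, Matrix.neg_mul, ← hB]; abel
    have := aux_core (-μ) (-h) (-lam) (-N) W hW hB' g δ s hδ hs hδs hsg
      (fun j k hjk => by simp [hN0 j k (by simpa using hjk)])
      (fun j k => by simpa using hN j k) (fun j => by simpa using hh' j) i
      (Finset.Ioi i) (Finset.Iio i) (by simp; omega)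
      (fun j hj => by
        have hj : j ≤ i := by simpa using hj
        by_cases e : μ j = μ i
        · left; simpa [e] using hord j i hj e
        · right
          refine ⟨by simpa using e, ?_⟩
          have h1 := hg j i e
          rw [abs_of_nonneg (sub_nonneg.2 (hμ hj))] at h1
          simp only [Pi.neg_apply]; linarith)
      (fun k hk => by
        have hk : i ≤ k := by simpa using hk
        simpa using hlam hk)
    simp only [Pi.neg_apply] at this
    linarith
  · have := aux_core μ h lam N W hW hB g δ s hδ hs hδs hsg hN0 hN hh' i
      (Finset.Iio i) (Finset.Ioi i) (by simp; omega)
      (fun j hj => by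
        have hj : i ≤ j := by simpa using hj
        by_cases e : μ j = μ i
        · left; exact ⟨e, hord i j hj e.symm⟩
        · right
          refine ⟨e, ?_⟩
          have h1 := hg i j (Ne.symm e)
          rw [abs_of_nonneg (sub_nonneg.2 (hμ hj))] at h1
          linarith)
      (fun k hk => by
        have hk : k ≤ i := by simpa using hk
        exact hlam hk)
    linarith

/-- Lemma `lemma:1`. Let `μ ∈ ℝ^n` be nonincreasing, `lam` the map
sending a symmetric matrix to its nonincreasingly ordered eigenvalue vector, and for
each `m` let `h m` be the concatenated vector `(λ(X₁ᵀM_mX₁),…,λ(X_rᵀM_mX_r))` of the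
blockwise eigenvalues of `M m` (encoded by `IsBlockEig`). Then for any sequence of
symmetric matrices `M_m → 0`:
`λ(Diag μ + M_m) = μ + h_m + o(‖M_m‖)`. -/
theorem statement5 {n : ℕ} (μ : Fin n → ℝ) (hμ : Antitone μ)
    (lam : Matrix (Fin n) (Fin n) ℝ → Fin n → ℝ) (hlam : IsEigCF lam)
    (M : ℕ → Matrix (Fin n) (Fin n) ℝ) (hMsym : ∀ m, (M m).IsSymm)
    (hM0 : Tendsto M atTop (nhds 0))
    (h : ℕ → Fin n → ℝ) (hh : ∀ m, IsBlockEig μ (M m) (h m)) :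
    (fun m => lam (Matrix.diagonal μ + M m) - (μ + h m)) =o[atTop] (fun m => ‖M m‖) := by
  obtain ⟨g, hg0, hg⟩ := aux_gap μ
  set s : ℝ := g / (2 * n + 2) with hsdef
  have hs : 0 < s := by positivity
  have hsg : 2 * n * s + 2 * s = g := by rw [hsdef]; field_simp
  have hn0 : Tendsto (fun m => ‖M m‖) atTop (nhds 0) := by simpa using hM0.norm
  set K : ℝ := 2 * n * ((n ^ 2) ^ 2 / s) with hK
  have hev1 : ∀ᶠ m in atTop, (n : ℝ) ^ 2 * ‖M m‖ ≤ s := by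
    have : Tendsto (fun m => (n : ℝ) ^ 2 * ‖M m‖) atTop (nhds 0) := by
      simpa using hn0.const_mul ((n : ℝ) ^ 2)
    exact (this.eventually (gt_mem_nhds hs)).mono fun m hm => hm.le
  rw [isLittleO_iff]
  intro c hc
  have hev2 : ∀ᶠ m in atTop, K * ‖M m‖ ≤ c := by
    have : Tendsto (fun m => K * ‖M m‖) atTop (nhds 0) := by
      simpa using hn0.const_mul K
    exact (this.eventually (gt_mem_nhds hc)).mono fun m hm => hm.le
  filter_upwards [hev1, hev2] with m h1 h2
  have hsym : (Matrix.diagonal μ + M m).IsSymm :=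
    (Matrix.isSymm_diagonal μ).add (hMsym m)
  obtain ⟨hanti, U, hU, hA⟩ := hlam _ hsym
  rw [norm_norm, pi_norm_le_iff_of_nonneg (by positivity)]
  intro i
  have := aux_main μ hμ _ hanti U (M m) hU hA (h m) (hh m) g s hs hg h1 (by linarith) i
  rw [Real.norm_eq_abs]
  refine le_trans this ?_
  calc _ = K * ‖M m‖ * ‖M m‖ := by rw [hK]; ring
    _ ≤ c * ‖M m‖ := mul_le_mul_of_nonneg_right h2 (norm_nonneg _)

end
end

section
/- Let {M_m} be a sequence of n×n symmetric matrices converging to 0 with M_m/‖M_m‖ → M, let μ ∈ ℝ^n with μ₁ ≥ … ≥ μ_n, and let U_m → U be orthogonal matrices with Diag μ + M_m = U_m (Diag λ(Diag μ + M_m)) U_mᵀ for all m, where λ(·) is the vector of eigenvalues in nonincreasing order. Then the limit orthogonal matrix U is block diagonal with respect to the blocks of μ; that is, U^{ij} = 0 whenever μ_i ≠ μ_j. -/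
open scoped BigOperators
open Filter Asymptotics Matrix

attribute [local instance] Matrix.normedAddCommGroup

noncomputable section

lemma antitone_eq_of_map_eq {n : ℕ} (f g : Fin n → ℝ) (hf : Antitone f) (hg : Antitone g)
    (h : Multiset.map f Finset.univ.val = Multiset.map g Finset.univ.val) : f = g := by
  have hp : (List.ofFn f).Perm (List.ofFn g) := by
    rw [← Multiset.coe_eq_coe]
    simpa [Fin.univ_def, List.ofFn_eq_map] using h
  exact List.ofFn_injective (hp.eq_of_pairwise' (r := (· ≥ ·))
    (by rw [List.pairwise_ofFn]; exact fun i j hij => hf hij.le)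
    (by rw [List.pairwise_ofFn]; exact fun i j hij => hg hij.le))

lemma diagonal_charpoly_roots {n : ℕ} (f : Fin n → ℝ) :
    (Matrix.diagonal f).charpoly.roots = Multiset.map f Finset.univ.val := by
  rw [Matrix.charpoly_diagonal]
  exact Polynomial.roots_multiset_prod_X_sub_C (Multiset.map f Finset.univ.val) ▸ by
    simp [Finset.prod, Function.comp_def]

/-- Theorem `important`, part 1. With `M_m → 0` symmetric,
`M_m/‖M_m‖ → M`, `μ` nonincreasing, and orthogonal `U_m → U` satisfying
`Diag μ + M_m = U_m (Diag λ(Diag μ + M_m)) U_mᵀ`, the limit `U` is block-diagonal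
with respect to the blocks of `μ`: `U^{ij} = 0` whenever `μ_i ≠ μ_j`. -/
theorem statement6 {n : ℕ}
    (μ : Fin n → ℝ) (hμ : Antitone μ)
    (lam : Matrix (Fin n) (Fin n) ℝ → Fin n → ℝ) (hlam : IsEigCF lam)
    (M : ℕ → Matrix (Fin n) (Fin n) ℝ) (hMsym : ∀ m, (M m).IsSymm)
    (hM0 : Tendsto M atTop (nhds 0))
    (Mlim : Matrix (Fin n) (Fin n) ℝ)
    (hMdir : Tendsto (fun m => ‖M m‖⁻¹ • M m) atTop (nhds Mlim))
    (U : ℕ → Matrix (Fin n) (Fin n) ℝ) (hUo : ∀ m, (U m)ᵀ * U m = 1)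
    (Ulim : Matrix (Fin n) (Fin n) ℝ) (hUlim : Tendsto U atTop (nhds Ulim))
    (hdec : ∀ m, Matrix.diagonal μ + M m
      = U m * Matrix.diagonal (lam (Matrix.diagonal μ + M m)) * (U m)ᵀ)
    : ∀ i j : Fin n, μ i ≠ μ j → Ulim i j = 0 := by
  have hL : ∀ m, Matrix.diagonal (lam (Matrix.diagonal μ + M m))
      = (U m)ᵀ * (Matrix.diagonal μ + M m) * U m := by
    intro m
    conv_rhs => rw [hdec m]
    have := hUo m
    calc _ = ((U m)ᵀ * U m) * Matrix.diagonal (lam (Matrix.diagonal μ + M m))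
              * ((U m)ᵀ * U m) := by rw [this]; simp
      _ = _ := by simp only [Matrix.mul_assoc]
  have hT : Tendsto (fun m => (U m)ᵀ * (Matrix.diagonal μ + M m) * U m) atTop
      (nhds (Ulimᵀ * (Matrix.diagonal μ + 0) * Ulim)) := by
    have hUt : Tendsto (fun m => (U m)ᵀ) atTop (nhds Ulimᵀ) :=
      ((continuous_id.matrix_transpose).tendsto Ulim).comp hUlim
    exact (hUt.mul (tendsto_const_nhds.add hM0)).mul hUlim
  rw [add_zero] at hT
  set A := Ulimᵀ * Matrix.diagonal μ * Ulim with hA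
  have hent : ∀ i j, Tendsto (fun m => Matrix.diagonal (lam (Matrix.diagonal μ + M m)) i j)
      atTop (nhds (A i j)) := by
    intro i j
    simp only [hL]
    exact ((continuous_id.matrix_elem i j).tendsto A).comp hT
  have hAd : A = Matrix.diagonal (fun i => A i i) := by
    ext i j
    by_cases hij : i = j
    · subst hij; simp
    · rw [Matrix.diagonal_apply_ne _ hij]
      have h := hent i j
      simp only [Matrix.diagonal_apply_ne _ hij] at h
      exact tendsto_nhds_unique h tendsto_const_nhds
  have hanti : Antitone (fun i => A i i) := by
    intro i j hij
    have hi := hent i i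
    have hj := hent j j
    simp only [Matrix.diagonal_apply_eq] at hi hj
    refine le_of_tendsto_of_tendsto' hj hi fun m => ?_
    exact (hlam _ ((Matrix.isSymm_diagonal μ).add (hMsym m))).1 hij
  have hUU : Ulimᵀ * Ulim = 1 := by
    have hUt : Tendsto (fun m => (U m)ᵀ) atTop (nhds Ulimᵀ) :=
      ((continuous_id.matrix_transpose).tendsto Ulim).comp hUlim
    have h := hUt.mul hUlim
    simp only [hUo] at h
    exact tendsto_nhds_unique h tendsto_const_nhds
  have hUU' : Ulim * Ulimᵀ = 1 := mul_eq_one_comm.mp hUU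
  have hcp : A.charpoly = (Matrix.diagonal μ).charpoly := by
    rw [hA, Matrix.mul_assoc, Matrix.charpoly_mul_comm, Matrix.mul_assoc, hUU', Matrix.mul_one]
  have hν : (fun i => A i i) = μ := by
    apply antitone_eq_of_map_eq _ _ hanti hμ
    rw [← diagonal_charpoly_roots, ← diagonal_charpoly_roots, ← hAd, hcp]
  have hcomm : Ulim * A = Matrix.diagonal μ * Ulim := by
    rw [hA, ← Matrix.mul_assoc, ← Matrix.mul_assoc, hUU', Matrix.one_mul]
  rw [hAd, hν] at hcomm
  intro i j hij
  have h := congrFun (congrFun hcomm i) j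
  rw [Matrix.mul_diagonal, Matrix.diagonal_mul] at h
  have h2 : (μ i - μ j) * Ulim i j = 0 := by linarith
  exact (mul_eq_zero.mp h2).resolve_left (sub_ne_zero.mpr hij)

end
end

section
/- Let {M_m} be a sequence of n×n symmetric matrices converging to 0 with M_m/‖M_m‖ → M, let μ ∈ ℝ^n with μ₁ ≥ … ≥ μ_n and blocks I₁,…,I_r, and let U_m → U be orthogonal matrices with Diag μ + M_m = U_m (Diag λ(Diag μ + M_m)) U_mᵀ for all m, where λ(·) is the vector of eigenvalues in nonincreasing order. Let h = (λ(X₁ᵀM X₁),…,λ(X_rᵀM X_r)) ∈ ℝ^n, where X_l is the n×|I_l| matrix whose columns are the standard basis vectors e^i, i ∈ I_l. Then UᵀM_in U = Diag h. -/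
open scoped BigOperators
open Filter Asymptotics Matrix

attribute [local instance] Matrix.normedAddCommGroup

noncomputable section

theorem antitone_eq_of_conj {n : ℕ} (f g : Fin n → ℝ) (hf : Antitone f) (hg : Antitone g)
    (A W V : Matrix (Fin n) (Fin n) ℝ) (hW : Wᵀ * W = 1) (hV : Vᵀ * V = 1)
    (h1 : Wᵀ * A * W = Matrix.diagonal f) (h2 : Vᵀ * A * V = Matrix.diagonal g) : f = g := by
  have key : ∀ (W : Matrix (Fin n) (Fin n) ℝ), Wᵀ * W = 1 →
      (Wᵀ * A * W).charpoly = A.charpoly := by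
    intro W hW
    rw [Matrix.charpoly_mul_comm, ← Matrix.mul_assoc, mul_eq_one_comm.mp hW, Matrix.one_mul]
  have hc : (Matrix.diagonal f).charpoly = (Matrix.diagonal g).charpoly := by
    rw [← h1, ← h2, key W hW, key V hV]
  rw [Matrix.charpoly_diagonal, Matrix.charpoly_diagonal] at hc
  have hr : ∀ f : Fin n → ℝ, (∏ i, (Polynomial.X - Polynomial.C (f i))).roots
      = Multiset.map f Finset.univ.val := by
    intro f
    have := Polynomial.roots_multiset_prod_X_sub_C (Multiset.map f Finset.univ.val)
    rw [Multiset.map_map] at this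
    exact this
  have hm : Multiset.map f Finset.univ.val = Multiset.map g Finset.univ.val := by
    rw [← hr f, ← hr g, hc]
  rw [Fin.univ_val_map, Fin.univ_val_map, Multiset.coe_eq_coe] at hm
  exact List.ofFn_injective (hm.eq_of_sortedGE hf.sortedGE_ofFn hg.sortedGE_ofFn)

theorem blockEig_unique {n : ℕ} (μ : Fin n → ℝ) (hμ : Antitone μ)
    (A : Matrix (Fin n) (Fin n) ℝ) (h g : Fin n → ℝ) (hh : IsBlockEig μ A h)
    (hg : IsBlockEig μ A g) : h = g := by
  have ev : ∀ h : Fin n → ℝ, (∀ i j : Fin n, i ≤ j → μ i = μ j → h j ≤ h i) →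
      ∀ᶠ t : ℝ in atTop, Antitone (fun i => h i + t * μ i) := by
    intro h hs
    have : ∀ i j : Fin n, ∀ᶠ t : ℝ in atTop, i ≤ j → h j + t * μ j ≤ h i + t * μ i := by
      intro i j
      by_cases hij : i ≤ j
      · rcases (hμ hij).eq_or_lt with e | e
        · filter_upwards with t _
          rw [e]
          linarith [hs i j hij e.symm]
        · filter_upwards [eventually_ge_atTop ((h j - h i) / (μ i - μ j))] with t ht _
          rw [div_le_iff₀ (by linarith)] at ht
          linarith
      · filter_upwards with t h'
        exact absurd h' hij
    have h2 := eventually_all.2 fun i => eventually_all.2 (this i)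
    filter_upwards [h2] with t ht i j hij
    exact ht i j hij
  have cm : ∀ (t : ℝ) (h : Fin n → ℝ) (V : Matrix (Fin n) (Fin n) ℝ), Vᵀ * V = 1 →
      (∀ i j, μ i ≠ μ j → V i j = 0) → Vᵀ * matIn μ A * V = Matrix.diagonal h →
      Vᵀ * (matIn μ A + t • Matrix.diagonal μ) * V
        = Matrix.diagonal (fun i => h i + t * μ i) := by
    intro t h V hV hb hd
    have hc : Matrix.diagonal μ * V = V * Matrix.diagonal μ := by
      ext i j
      rw [Matrix.diagonal_mul, Matrix.mul_diagonal]
      by_cases e : μ i = μ j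
      · rw [e, mul_comm]
      · rw [hb i j e]; simp
    rw [Matrix.mul_add, Matrix.add_mul, hd, Matrix.mul_smul, Matrix.smul_mul, Matrix.mul_assoc,
      hc, ← Matrix.mul_assoc, hV, Matrix.one_mul]
    ext i j
    by_cases e : i = j
    · subst e; simp
    · simp [e]
  obtain ⟨t, ht1, ht2⟩ := ((ev h hh.1).and (ev g hg.1)).exists
  obtain ⟨_, V, hV, hVb, hVd⟩ := hh
  obtain ⟨_, W, hW, hWb, hWd⟩ := hg
  have := antitone_eq_of_conj _ _ ht1 ht2 _ V W hV hW (cm t h V hV hVb hVd) (cm t g W hW hWb hWd)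
  funext i
  have := congrFun this i
  simpa using this

/-- Theorem `important`, part 2. With `M_m → 0` symmetric,
`M_m/‖M_m‖ → M`, `μ` nonincreasing, orthogonal `U_m → U` satisfying
`Diag μ + M_m = U_m (Diag λ(Diag μ + M_m)) U_mᵀ`, and `h` the concatenated vector of
blockwise nonincreasingly ordered eigenvalues `(λ(X₁ᵀMX₁),…,λ(X_rᵀMX_r))` of `M`
(encoded by `IsBlockEig`), one has `Uᵀ M_in U = Diag h`. -/
theorem statement7 {n : ℕ}
    (μ : Fin n → ℝ) (hμ : Antitone μ)
    (lam : Matrix (Fin n) (Fin n) ℝ → Fin n → ℝ) (hlam : IsEigCF lam)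
    (M : ℕ → Matrix (Fin n) (Fin n) ℝ) (hMsym : ∀ m, (M m).IsSymm)
    (hM0 : Tendsto M atTop (nhds 0))
    (Mlim : Matrix (Fin n) (Fin n) ℝ)
    (hMdir : Tendsto (fun m => ‖M m‖⁻¹ • M m) atTop (nhds Mlim))
    (U : ℕ → Matrix (Fin n) (Fin n) ℝ) (hUo : ∀ m, (U m)ᵀ * U m = 1)
    (Ulim : Matrix (Fin n) (Fin n) ℝ) (hUlim : Tendsto U atTop (nhds Ulim))
    (hdec : ∀ m, Matrix.diagonal μ + M m
      = U m * Matrix.diagonal (lam (Matrix.diagonal μ + M m)) * (U m)ᵀ)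
    (h : Fin n → ℝ) (hh : IsBlockEig μ Mlim h)
    : Ulimᵀ * matIn μ Mlim * Ulim = Matrix.diagonal h := by
  have hentry : ∀ {F : ℕ → Matrix (Fin n) (Fin n) ℝ} {L : Matrix (Fin n) (Fin n) ℝ},
      Tendsto F atTop (nhds L) → ∀ i j, Tendsto (fun m => F m i j) atTop (nhds (L i j)) := by
    intro F L hF i j
    exact tendsto_pi_nhds.1 (tendsto_pi_nhds.1 hF i) j
  have hct : Continuous (fun A : Matrix (Fin n) (Fin n) ℝ => Aᵀ) := continuous_id.matrix_transpose
  have hUT : Tendsto (fun m => (U m)ᵀ) atTop (nhds Ulimᵀ) := (hct.tendsto Ulim).comp hUlim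
  have hUlo : Ulimᵀ * Ulim = 1 := by
    have h1 : Tendsto (fun m => (U m)ᵀ * U m) atTop (nhds (Ulimᵀ * Ulim)) := hUT.mul hUlim
    simp only [hUo] at h1
    exact (tendsto_nhds_unique h1 tendsto_const_nhds)
  set l : ℕ → Fin n → ℝ := fun m => lam (Matrix.diagonal μ + M m) with hl
  have hanti : ∀ m, Antitone (l m) := by
    intro m
    refine (hlam _ ?_).1
    rw [Matrix.IsSymm, Matrix.transpose_add, Matrix.diagonal_transpose, hMsym m]
  have hL : ∀ m, (U m)ᵀ * (Matrix.diagonal μ + M m) * U m = Matrix.diagonal (l m) := by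
    intro m
    rw [hdec m]
    calc _ = ((U m)ᵀ * U m) * Matrix.diagonal (l m) * ((U m)ᵀ * U m) := by
          simp only [Matrix.mul_assoc, hl]
      _ = _ := by rw [hUo]; simp
  have hDU : ∀ m, Matrix.diagonal μ * U m + M m * U m = U m * Matrix.diagonal (l m) := by
    intro m
    rw [← hL m, ← Matrix.add_mul, ← Matrix.mul_assoc, ← Matrix.mul_assoc,
      mul_eq_one_comm.mp (hUo m), Matrix.one_mul]
  -- the limit of the eigenvalues
  have hLlim : Tendsto (fun m => Matrix.diagonal (l m)) atTop
      (nhds (Ulimᵀ * Matrix.diagonal μ * Ulim)) := by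
    have h1 : Tendsto (fun m => (U m)ᵀ * (Matrix.diagonal μ + M m) * U m) atTop
        (nhds (Ulimᵀ * (Matrix.diagonal μ + 0) * Ulim)) :=
      (hUT.mul (tendsto_const_nhds.add hM0)).mul hUlim
    simpa only [hL, add_zero] using h1
  have hν : Ulimᵀ * Matrix.diagonal μ * Ulim
      = Matrix.diagonal (fun i => (Ulimᵀ * Matrix.diagonal μ * Ulim) i i) := by
    ext i j
    by_cases e : i = j
    · subst e; simp
    · rw [Matrix.diagonal_apply_ne _ e]
      have h1 := hentry hLlim i j
      simp only [Matrix.diagonal_apply_ne _ e] at h1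
      exact tendsto_nhds_unique h1 tendsto_const_nhds
  have hlν : ∀ i, Tendsto (fun m => l m i) atTop
      (nhds ((Ulimᵀ * Matrix.diagonal μ * Ulim) i i)) := by
    intro i
    have h1 := hentry hLlim i i
    simpa only [Matrix.diagonal_apply_eq] using h1
  have hνμ : (fun i => (Ulimᵀ * Matrix.diagonal μ * Ulim) i i) = μ := by
    refine antitone_eq_of_conj _ _ ?_ hμ (Matrix.diagonal μ) Ulim 1 hUlo (by simp) hν (by simp)
    intro i j hij
    exact le_of_tendsto_of_tendsto' (hlν j) (hlν i) (fun m => hanti m hij)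
  have hlμ : ∀ i, Tendsto (fun m => l m i) atTop (nhds (μ i)) := by
    intro i
    have h1 := hlν i
    rwa [congrFun hνμ i] at h1
  rw [hνμ] at hν
  have hcomm : Matrix.diagonal μ * Ulim = Ulim * Matrix.diagonal μ := by
    rw [← hν, ← Matrix.mul_assoc, ← Matrix.mul_assoc, mul_eq_one_comm.mp hUlo, Matrix.one_mul, hν]
  have hblk : ∀ i j, μ i ≠ μ j → Ulim i j = 0 := by
    intro i j hij
    have h1 := congrFun (congrFun hcomm i) j
    rw [Matrix.diagonal_mul, Matrix.mul_diagonal] at h1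
    have h2 : (μ i - μ j) * Ulim i j = 0 := by linarith
    exact (mul_eq_zero.1 h2).resolve_left (sub_ne_zero.2 hij)
  -- first-order analysis
  set c : ℕ → ℝ := fun m => ‖M m‖⁻¹ with hc
  have hc0 : ∀ m, 0 ≤ c m := fun m => inv_nonneg.2 (norm_nonneg _)
  have hB : Tendsto (fun m => (U m)ᵀ * (c m • M m) * U m) atTop (nhds (Ulimᵀ * Mlim * Ulim)) :=
    (hUT.mul hMdir).mul hUlim
  have hMU : Tendsto (fun m => (c m • M m) * U m) atTop (nhds (Mlim * Ulim)) :=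
    hMdir.mul hUlim
  have hterm : ∀ i j k, μ i = μ j →
      Tendsto (fun m => c m * (U m k i * (μ k - μ i) * U m k j)) atTop (nhds 0) := by
    intro i j k hij
    by_cases e : μ k = μ i
    · simp [e]
    · have e' : μ k - μ i ≠ 0 := sub_ne_zero.2 e
      have h1 : Tendsto (fun m => μ k - l m i) atTop (nhds (μ k - μ i)) :=
        tendsto_const_nhds.sub (hlμ i)
      have h2 : Tendsto (fun m => (μ k - μ i) / (μ k - l m i)) atTop
          (nhds ((μ k - μ i) / (μ k - μ i))) := tendsto_const_nhds.div h1 e'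
      have h3 : Tendsto (fun m => U m k j) atTop (nhds 0) := by
        have := hentry hUlim k j
        rwa [hblk k j (by rwa [← hij])] at this
      have h4 := (((hentry hMU k i).neg).mul h2).mul h3
      rw [mul_zero] at h4
      refine h4.congr' ?_
      filter_upwards [h1.eventually_ne e'] with m hm
      have h5 := congrFun (congrFun (hDU m) k) i
      rw [Matrix.add_apply, Matrix.diagonal_mul, Matrix.mul_diagonal] at h5
      rw [Matrix.smul_mul, Matrix.smul_apply, smul_eq_mul]
      have h6 : (M m * U m) k i = - (U m k i * (μ k - l m i)) := by linarith
      rw [h6]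
      field_simp
  have hid : ∀ m i j, ((U m)ᵀ * (c m • M m) * U m) i j
      + ∑ k, c m * (U m k i * (μ k - μ i) * U m k j)
      = c m * ((Matrix.diagonal (l m) i j) - μ i * (1 : Matrix (Fin n) (Fin n) ℝ) i j) := by
    intro m i j
    rw [← hL m, ← hUo m, Matrix.mul_add, Matrix.add_mul, Matrix.add_apply, Matrix.mul_smul,
      Matrix.smul_mul, Matrix.smul_apply, smul_eq_mul, ← Finset.mul_sum]
    have h1 : ((U m)ᵀ * Matrix.diagonal μ * U m) i j = ∑ k, U m k i * μ k * U m k j := by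
      rw [Matrix.mul_apply]
      simp only [Matrix.mul_diagonal, Matrix.transpose_apply]
    have h2 : ((U m)ᵀ * U m) i j = ∑ k, U m k i * U m k j := by
      rw [Matrix.mul_apply]
      simp only [Matrix.transpose_apply]
    rw [h1, h2]
    have h3 : ∑ k, U m k i * (μ k - μ i) * U m k j
        = ∑ k, U m k i * μ k * U m k j - μ i * ∑ k, U m k i * U m k j := by
      rw [Finset.mul_sum, ← Finset.sum_sub_distrib]
      exact Finset.sum_congr rfl fun k _ => by ring
    rw [h3]
    ring
  have hlim : ∀ i j, μ i = μ j → Tendsto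
      (fun m => c m * ((Matrix.diagonal (l m) i j) - μ i * (1 : Matrix (Fin n) (Fin n) ℝ) i j))
      atTop (nhds ((Ulimᵀ * Mlim * Ulim) i j)) := by
    intro i j hij
    have h1 := (hentry hB i j).add (tendsto_finsetSum Finset.univ
      (fun k _ => hterm i j k hij))
    simpa only [hid, Finset.sum_const_zero, add_zero] using h1
  set g : Fin n → ℝ := fun i => (Ulimᵀ * Mlim * Ulim) i i with hgdef
  have hgo : ∀ i j : Fin n, i ≤ j → μ i = μ j → g j ≤ g i := by
    intro i j hij hm
    refine le_of_tendsto_of_tendsto' (hlim j j rfl) (hlim i i rfl) fun m => ?_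
    simp only [Matrix.diagonal_apply_eq, Matrix.one_apply_eq, mul_one, hm]
    exact mul_le_mul_of_nonneg_left (by linarith [hanti m hij]) (hc0 m)
  have hexp : ∀ (A : Matrix (Fin n) (Fin n) ℝ) (i j : Fin n),
      (Ulimᵀ * A * Ulim) i j = ∑ b, ∑ a, Ulim a i * A a b * Ulim b j := by
    intro A i j
    rw [Matrix.mul_apply]
    refine Finset.sum_congr rfl fun b _ => ?_
    rw [Matrix.mul_apply, Finset.sum_mul]
    simp only [Matrix.transpose_apply]
  have hgd : Ulimᵀ * matIn μ Mlim * Ulim = Matrix.diagonal g := by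
    ext i j
    by_cases hij : μ i = μ j
    · have h1 : (Ulimᵀ * matIn μ Mlim * Ulim) i j = (Ulimᵀ * Mlim * Ulim) i j := by
        rw [hexp, hexp]
        refine Finset.sum_congr rfl fun b _ => Finset.sum_congr rfl fun a _ => ?_
        by_cases ha : μ a = μ i
        · by_cases hb : μ b = μ j
          · have : μ a = μ b := by rw [ha, hb, hij]
            simp [matIn, this]
          · rw [hblk b j hb]; simp
        · rw [hblk a i ha]; simp
      rw [h1]
      by_cases e : i = j
      · subst e; simp [hgdef]
      · rw [Matrix.diagonal_apply_ne _ e]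
        have h2 := hlim i j hij
        simp only [Matrix.diagonal_apply_ne _ e, Matrix.one_apply_ne e, mul_zero, sub_zero] at h2
        exact tendsto_nhds_unique h2 tendsto_const_nhds
    · have e : i ≠ j := fun e => hij (by rw [e])
      rw [Matrix.diagonal_apply_ne _ e, hexp]
      refine Finset.sum_eq_zero fun b _ => Finset.sum_eq_zero fun a _ => ?_
      by_cases ha : μ a = μ i
      · by_cases hb : μ b = μ j
        · have : μ a ≠ μ b := by rw [ha, hb]; exact hij
          simp [matIn, this]
        · rw [hblk b j hb]; simp
      · rw [hblk a i ha]; simp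
  rw [hgd, blockEig_unique μ hμ Mlim h g hh ⟨hgo, Ulim, hUlo, hblk, hgd⟩]

end
end

section
/- Let {M_m} be a sequence of n×n symmetric matrices converging to 0 with M_m/‖M_m‖ → M, let μ ∈ ℝ^n with μ₁ ≥ … ≥ μ_n and blocks I₁,…,I_r, and let U_m → U be orthogonal matrices with Diag μ + M_m = U_m (Diag λ(Diag μ + M_m)) U_mᵀ for all m, where λ(·) is the vector of eigenvalues in nonincreasing order. Then for any indexes i ∈ I_l, j ∈ I_s, and t ∈ {1,…,r}, one has the first-order expansion Σ_{p ∈ I_t} U_m^{ip} U_m^{jp} = δ_{ij} δ_{lt} + ((δ_{lt} − δ_{st})/(μ_i − μ_j)) M^{ij} ‖M_m‖ + o(‖M_m‖), with the convention that the fraction is zero whenever δ_{lt} = δ_{st}, regardless of the denominator. -/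
open scoped BigOperators
open Filter Asymptotics Matrix

attribute [local instance] Matrix.normedAddCommGroup

noncomputable section

theorem helper_eig_unique {n : ℕ} (μ ν : Fin n → ℝ) (hμ : Antitone μ) (hν : Antitone ν)
    (V : Matrix (Fin n) (Fin n) ℝ) (hV : Vᵀ * V = 1)
    (h : Matrix.diagonal μ = V * Matrix.diagonal ν * Vᵀ) : ν = μ := by
  have hc : (Matrix.diagonal μ).charpoly = (Matrix.diagonal ν).charpoly := by
    rw [h, Matrix.charpoly_mul_comm, ← mul_assoc, hV, one_mul]
  have hr : ∀ f : Fin n → ℝ, (Matrix.diagonal f).charpoly.roots = Finset.univ.val.map f := by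
    intro f
    rw [Matrix.charpoly_diagonal]
    have h := Polynomial.roots_multiset_prod_X_sub_C (Finset.univ.val.map f)
    rw [Multiset.map_map] at h
    exact h
  have hm : Finset.univ.val.map ν = Finset.univ.val.map μ := by
    rw [← hr, ← hr, hc]
  simp only [Fin.univ_val_map] at hm
  exact List.ofFn_injective
    ((Multiset.coe_eq_coe.1 hm).eq_of_sortedGE hν.sortedGE_ofFn hμ.sortedGE_ofFn)

theorem helper_littleO (r f g : ℕ → ℝ) (c : ℝ) (hf : ∀ᶠ m in atTop, f m = r m * g m)
    (hg : Tendsto g atTop (nhds c)) :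
    (fun m => f m - c * r m) =o[atTop] r := by
  have h1 : (fun m => (g m - c) * r m) =o[atTop] (fun m => (1 : ℝ) * r m) := by
    refine IsLittleO.mul_isBigO ?_ (isBigO_refl _ _)
    rw [isLittleO_one_iff]
    simpa using hg.sub_const c
  simp only [one_mul] at h1
  refine h1.congr' ?_ EventuallyEq.rfl
  filter_upwards [hf] with m hm
  rw [hm]; ring

/-- Theorem `important`, part 3. With `M_m → 0` symmetric,
`M_m/‖M_m‖ → M`, `μ` nonincreasing, and orthogonal `U_m → U` satisfying
`Diag μ + M_m = U_m (Diag λ(Diag μ + M_m)) U_mᵀ`: for any indices `i ∈ I_l`, `j ∈ I_s`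
and any block `I_t` (represented by any of its members `t'`, so `I_t = {p | μ p = μ t'}`,
`δ_{lt} = δ_{μ i, μ t'}`, `δ_{st} = δ_{μ j, μ t'}`), one has the first-order expansion
`∑_{p ∈ I_t} U_m^{ip}U_m^{jp}
  = δ_{ij}δ_{lt} + ((δ_{lt}-δ_{st})/(μ_i-μ_j)) M^{ij}‖M_m‖ + o(‖M_m‖)`,
the fraction being `0` whenever `δ_{lt} = δ_{st}`. -/
theorem statement8 {n : ℕ}
    (μ : Fin n → ℝ) (hμ : Antitone μ)
    (lam : Matrix (Fin n) (Fin n) ℝ → Fin n → ℝ) (hlam : IsEigCF lam)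
    (M : ℕ → Matrix (Fin n) (Fin n) ℝ) (hMsym : ∀ m, (M m).IsSymm)
    (hM0 : Tendsto M atTop (nhds 0))
    (Mlim : Matrix (Fin n) (Fin n) ℝ)
    (hMdir : Tendsto (fun m => ‖M m‖⁻¹ • M m) atTop (nhds Mlim))
    (U : ℕ → Matrix (Fin n) (Fin n) ℝ) (hUo : ∀ m, (U m)ᵀ * U m = 1)
    (Ulim : Matrix (Fin n) (Fin n) ℝ) (hUlim : Tendsto U atTop (nhds Ulim))
    (hdec : ∀ m, Matrix.diagonal μ + M m
      = U m * Matrix.diagonal (lam (Matrix.diagonal μ + M m)) * (U m)ᵀ)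
    (i j t' : Fin n)
    : (fun m => (∑ p : Fin n, if μ p = μ t' then U m i p * U m j p else 0)
        - ((if i = j then (1:ℝ) else 0) * (if μ i = μ t' then (1:ℝ) else 0)
          + (if (μ i = μ t') ↔ (μ j = μ t') then (0:ℝ)
              else ((if μ i = μ t' then (1:ℝ) else 0) - (if μ j = μ t' then (1:ℝ) else 0))
                    / (μ i - μ j))
            * Mlim i j * ‖M m‖))
      =o[atTop] (fun m => ‖M m‖) := by
  have hN : ∀ m, M m = ‖M m‖ • (‖M m‖⁻¹ • M m) := by
    intro m
    by_cases h0 : ‖M m‖ = 0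
    · rw [h0, zero_smul]; exact norm_eq_zero.1 h0
    · rw [smul_smul, mul_inv_cancel₀ h0, one_smul]
  have hr0 : Tendsto (fun m => ‖M m‖) atTop (nhds 0) := by simpa using hM0.norm
  generalize hr : (fun m => ‖M m‖) = r at *
  have hr' : ∀ m, ‖M m‖ = r m := fun m => congrFun hr m
  simp only [hr'] at *
  obtain ⟨N, hNdef⟩ : ∃ N : ℕ → Matrix (Fin n) (Fin n) ℝ, N = fun m => (r m)⁻¹ • M m := ⟨_, rfl⟩
  have hN : ∀ m, M m = r m • N m := by rw [hNdef]; exact hN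
  rw [← hNdef] at hMdir
  have hNsym : ∀ m, (N m).IsSymm := by
    intro m; rw [hNdef]; exact (hMsym m).smul _
  obtain ⟨L, hL⟩ : ∃ L : ℕ → Fin n → ℝ, L = fun m => lam (Matrix.diagonal μ + M m) := ⟨_, rfl⟩
  have hLm : ∀ m, lam (Matrix.diagonal μ + M m) = L m := fun m => by rw [hL]
  simp only [hLm] at hdec
  have hLanti : ∀ m, Antitone (L m) := by
    intro m; rw [← hLm]
    exact (hlam _ ((Matrix.isSymm_diagonal μ).add (hMsym m))).1
  have hUo2 : ∀ m, U m * (U m)ᵀ = 1 := fun m => mul_eq_one_comm.1 (hUo m)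
  have hUt : Tendsto (fun m => (U m)ᵀ) atTop (nhds Ulimᵀ) :=
    (Continuous.tendsto (by fun_prop : Continuous fun A : Matrix (Fin n) (Fin n) ℝ => Aᵀ) Ulim).comp hUlim
  have hVo : Ulimᵀ * Ulim = 1 := by
    refine tendsto_nhds_unique (hUt.mul hUlim) ?_
    simp only [hUo]; exact tendsto_const_nhds
  have hVo2 : Ulim * Ulimᵀ = 1 := mul_eq_one_comm.1 hVo
  have hdiag : ∀ m, Matrix.diagonal (L m) = (U m)ᵀ * (Matrix.diagonal μ + M m) * U m := by
    intro m
    rw [hdec m]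
    calc _ = ((U m)ᵀ * U m) * Matrix.diagonal (L m) * ((U m)ᵀ * U m) := by rw [hUo]; simp
      _ = _ := by simp only [mul_assoc]
  have hDt : Tendsto (fun m => Matrix.diagonal (L m)) atTop
      (nhds (Ulimᵀ * Matrix.diagonal μ * Ulim)) := by
    simp only [hdiag]
    have := (hUt.mul (hM0.const_add (Matrix.diagonal μ))).mul hUlim
    simpa using this
  have hent : ∀ (A : ℕ → Matrix (Fin n) (Fin n) ℝ) (B : Matrix (Fin n) (Fin n) ℝ),
      Tendsto A atTop (nhds B) → ∀ a b, Tendsto (fun m => A m a b) atTop (nhds (B a b)) := by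
    intro A B h a b
    exact (Continuous.tendsto (by fun_prop : Continuous fun A : Matrix (Fin n) (Fin n) ℝ => A a b) B).comp h
  obtain ⟨ν, hνdef⟩ : ∃ ν : Fin n → ℝ, ν = fun p => (Ulimᵀ * Matrix.diagonal μ * Ulim) p p := ⟨_, rfl⟩
  have hLν : ∀ p, Tendsto (fun m => L m p) atTop (nhds (ν p)) := by
    intro p
    have := hent _ _ hDt p p
    simpa [hνdef] using this
  have hνd : Matrix.diagonal ν = Ulimᵀ * Matrix.diagonal μ * Ulim := by
    ext a b
    by_cases hab : a = b
    · subst hab; simp [hνdef]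
    · have h1 := hent _ _ hDt a b
      simp only [Matrix.diagonal_apply_ne _ hab] at h1 ⊢
      exact tendsto_nhds_unique tendsto_const_nhds h1
  have hνanti : Antitone ν := fun a b hab =>
    le_of_tendsto_of_tendsto' (hLν b) (hLν a) (fun m => hLanti m hab)
  have hνμ : ν = μ := by
    refine helper_eig_unique μ ν hμ hνanti Ulim hVo ?_
    rw [hνd]
    calc _ = (Ulim * Ulimᵀ) * Matrix.diagonal μ * (Ulim * Ulimᵀ) := by rw [hVo2]; simp
      _ = _ := by simp only [mul_assoc]
  subst hνμ
  have hcomm : Ulim * Matrix.diagonal ν = Matrix.diagonal ν * Ulim := by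
    conv_lhs => rw [hνd]
    rw [← mul_assoc, ← mul_assoc, hVo2, one_mul]
  have hU0 : ∀ a p, ν a ≠ ν p → Ulim a p = 0 := by
    intro a p hap
    have h1 := congrFun (congrFun hcomm a) p
    rw [Matrix.mul_diagonal, Matrix.diagonal_mul] at h1
    have h2 : (ν a - ν p) * Ulim a p = 0 := by linarith
    rcases mul_eq_zero.1 h2 with h | h
    · exact absurd (sub_eq_zero.1 h) hap
    · exact h
  have hev : ∀ m, (Matrix.diagonal ν + M m) * U m = U m * Matrix.diagonal (L m) := by
    intro m
    rw [hdec m, mul_assoc, hUo, mul_one]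
  have hevp : ∀ m a p, (ν a - L m p) * U m a p = - (r m * (N m * U m) a p) := by
    intro m a p
    have h1 := congrFun (congrFun (hev m) a) p
    rw [hN m, add_mul, Matrix.add_apply, Matrix.diagonal_mul, Matrix.mul_diagonal,
      Matrix.smul_mul, Matrix.smul_apply, smul_eq_mul] at h1
    linarith
  have hW : ∀ a p, ν a ≠ ν p → ∃ w : ℕ → ℝ, (∀ᶠ m in atTop, U m a p = r m * w m) ∧
      Tendsto w atTop (nhds (- (Mlim * Ulim) a p / (ν a - ν p))) := by
    intro a p hap
    refine ⟨fun m => - (N m * U m) a p / (ν a - L m p), ?_, ?_⟩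
    · have h1 : Tendsto (fun m => ν a - L m p) atTop (nhds (ν a - ν p)) := (hLν p).const_sub _
      filter_upwards [h1.eventually_ne (sub_ne_zero.2 hap)] with m hm
      have := hevp m a p
      field_simp
      linarith
    · exact (hent _ _ (hMdir.mul hUlim) a p).neg.div ((hLν p).const_sub _) (sub_ne_zero.2 hap)
  have hMs : ∀ a b, Mlim a b = Mlim b a := by
    intro a b
    refine tendsto_nhds_unique (hent _ _ hMdir a b) ?_
    have := hent _ _ hMdir b a
    refine this.congr (fun m => ?_)
    exact (hNsym m).apply a b
  have hoff : ∀ a b p, ν a ≠ ν p → ν b ≠ ν p →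
      (fun m => U m a p * U m b p) =o[atTop] r := by
    intro a b p ha hb
    obtain ⟨w, hw, hwt⟩ := hW a p ha
    obtain ⟨w', hw', hwt'⟩ := hW b p hb
    have := helper_littleO r (fun m => U m a p * U m b p) (fun m => r m * (w m * w' m)) 0 ?_ ?_
    · simpa using this
    · filter_upwards [hw, hw'] with m h1 h2
      rw [h1, h2]; ring
    · simpa using hr0.mul (hwt.mul hwt')
  have hmix : ∀ a b, ν a = ν t' → ν b ≠ ν t' →
      (fun m => (∑ p : Fin n, if ν p = ν t' then U m a p * U m b p else 0)
        - (1 / (ν a - ν b) * Mlim a b) * r m) =o[atTop] r := by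
    intro a b ha hb
    have hlim : (1 / (ν a - ν b) * Mlim a b) = ∑ p : Fin n, if ν p = ν t' then
        Ulim a p * (- (Mlim * Ulim) b p / (ν b - ν p)) else 0 := by
      have h1 : ∀ p, (if ν p = ν t' then
        Ulim a p * (- (Mlim * Ulim) b p / (ν b - ν p)) else 0)
          = 1 / (ν a - ν b) * ((Mlim * Ulim) b p * Ulimᵀ p a) := by
        intro p
        have hab : ν a - ν b ≠ 0 := by
          rw [sub_ne_zero, ha]; exact fun h => hb h.symm
        have hba : ν b - ν a ≠ 0 := by
          rw [sub_ne_zero, ha]; exact hb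
        split_ifs with hp
        · rw [hp, ← ha, Matrix.transpose_apply]
          rw [← neg_sub (ν a) (ν b), neg_div_neg_eq]
          ring
        · rw [Matrix.transpose_apply, hU0 a p (by rw [ha]; exact fun h => hp h.symm)]
          ring
      simp only [h1]
      rw [← Finset.mul_sum, ← Matrix.mul_apply, mul_assoc, hVo2, mul_one, hMs]
    rw [hlim]
    simp only [Finset.sum_mul, ← Finset.sum_sub_distrib]
    refine IsLittleO.fun_sum (fun p _ => ?_)
    by_cases hp : ν p = ν t'
    · simp only [hp, if_true]
      obtain ⟨w, hw, hwt⟩ := hW b p (by rw [hp]; exact hb)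
      refine helper_littleO r _ (fun m => U m a p * w m) _ ?_ ?_
      · filter_upwards [hw] with m h1
        rw [h1]; ring
      · rw [hp] at hwt
        exact (hent _ _ hUlim a p).mul hwt
    · simp only [hp, if_false]
      simp
  by_cases hi : ν i = ν t' <;> by_cases hj : ν j = ν t'
  · have h1 : (fun m => -∑ p : Fin n, if ν p = ν t' then 0 else U m i p * U m j p) =o[atTop] r := by
      refine IsLittleO.neg_left (IsLittleO.fun_sum (fun p _ => ?_))
      by_cases hp : ν p = ν t'
      · simp [hp]
      · simp only [hp, if_false]
        exact hoff i j p (by rw [hi]; exact fun h => hp h.symm) (by rw [hj]; exact fun h => hp h.symm)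
    refine h1.congr_left (fun m => ?_)
    have h2 := congrFun (congrFun (hUo2 m) i) j
    rw [Matrix.mul_apply, Matrix.one_apply] at h2
    simp only [hi, hj, if_true, mul_one, zero_mul, add_zero, iff_self]
    rw [← h2, ← Finset.sum_sub_distrib, ← Finset.sum_neg_distrib]
    refine Finset.sum_congr rfl (fun p _ => ?_)
    simp only [Matrix.transpose_apply]
    split_ifs <;> ring
  · refine (hmix i j hi hj).congr_left (fun m => ?_)
    have hij : i ≠ j := by rintro rfl; exact hj hi
    simp [hi, hj, hij]
  · refine (hmix j i hj hi).congr_left (fun m => ?_)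
    have hij : i ≠ j := by rintro rfl; exact hi hj
    simp only [hi, hj, hij, if_true, if_false, zero_mul, zero_add, iff_true, zero_sub]
    rw [hMs j i]
    congr 1
    · refine Finset.sum_congr rfl (fun p _ => ?_)
      split_ifs <;> ring
    · rw [← neg_sub (ν t') (ν i), neg_div_neg_eq]
  · have h1 : (fun m => ∑ p : Fin n, if ν p = ν t' then U m i p * U m j p else 0) =o[atTop] r := by
      refine IsLittleO.fun_sum (fun p _ => ?_)
      by_cases hp : ν p = ν t'
      · simp only [hp, if_true]
        exact hoff i j p (by rw [hp]; exact hi) (by rw [hp]; exact hj)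
      · simp [hp]
    refine h1.congr_left (fun m => ?_)
    simp [hi, hj]

end
end

section
/- Let {M_m} be a sequence of n×n symmetric matrices converging to 0 with M_m/‖M_m‖ → M, let μ ∈ ℝ^n with μ₁ ≥ … ≥ μ_n, and let U_m → U be orthogonal matrices with Diag μ + M_m = U_m (Diag λ(Diag μ + M_m)) U_mᵀ for all m. Then for every μ-block-constant k-tensor T on ℝ^n, any n×n matrices H₁,…,H_k, and any permutation σ on {1,…,k}: lim_{m→∞} ((U_m(Diag^σ T)U_mᵀ − Diag^σ T)/‖M_m‖)[H₁,…,H_k] = Σ_{l=1}^k (Diag^{σ_{(l)}} T^{(l)}_out)[H₁,…,H_k, M_out]. -/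
open scoped BigOperators
open Filter Asymptotics Matrix

attribute [local instance] Matrix.normedAddCommGroup

noncomputable section

theorem aux_antitone_perm {n : ℕ} (μ d : Fin n → ℝ) (hμ : Antitone μ) (hd : Antitone d)
    (π : Equiv.Perm (Fin n)) (h : ∀ j, μ (π j) = d j) : d = μ := by
  have h1 : Monotone ((fun i => - μ i) ∘ (π : Fin n → Fin n)) := by
    intro a b hab
    simp only [Function.comp, h]
    exact neg_le_neg (hd hab)
  have h2 : Monotone ((fun i => - μ i) ∘ ((1 : Equiv.Perm (Fin n)) : Fin n → Fin n)) := by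
    intro a b hab
    simpa using hμ hab
  have h3 := Tuple.unique_monotone h1 h2
  funext j
  have h4 := congrFun h3 j
  simp only [Function.comp, h, Equiv.Perm.coe_one, id] at h4
  linarith

theorem aux_perm_nonzero {n : ℕ} (V : Matrix (Fin n) (Fin n) ℝ) (hV : Vᵀ * V = 1) :
    ∃ π : Equiv.Perm (Fin n), ∀ j, V (π j) j ≠ 0 := by
  by_contra hcon
  push Not at hcon
  have hdet : V.det = 0 := by
    rw [Matrix.det_apply]
    refine Finset.sum_eq_zero fun π _ => ?_
    obtain ⟨j, hj⟩ := hcon π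
    have h0 : ∏ x, V (π x) x = 0 :=
      Finset.prod_eq_zero (f := fun x => V (π x) x) (Finset.mem_univ j) hj
    rw [h0, smul_zero]
  have := congrArg Matrix.det hV
  rw [Matrix.det_mul, hdet] at this
  simp at this

theorem aux_sum_perm {k n : ℕ} (σ : Equiv.Perm (Fin k)) (p : Fin k → Fin n)
    (A : (Fin k → Fin n) → ℝ) :
    ∑ q : Fin k → Fin n, (if ∀ s, p s = q (σ s) then A q else 0) = A (p ∘ σ.symm) := by
  rw [Finset.sum_eq_single (p ∘ σ.symm)]
  · simp
  · intro q _ hq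
    rw [if_neg]
    intro hall
    apply hq
    funext s
    simp [hall]
  · simp

theorem aux_conj {k n : ℕ} (U : Matrix (Fin n) (Fin n) ℝ) (σ : Equiv.Perm (Fin k))
    (T : Tensor k n) (i j : Fin k → Fin n) :
    conj2 U (diagPerm σ T) i j
      = ∑ p : Fin k → Fin n, T p * ∏ s, (U (i s) (p s) * U (j (σ s)) (p s)) := by
  unfold conj2 diagPerm
  refine Finset.sum_congr rfl fun p _ => ?_
  simp only [ite_mul, zero_mul]
  rw [aux_sum_perm σ p (fun q => T p * ((∏ s, U (i s) (p s)) * ∏ s, U (j s) (q s)))]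
  rw [Finset.prod_mul_distrib]
  congr 2
  rw [← Equiv.prod_comp σ]
  simp

/-- normalized block indicator -/
def auxChi {n : ℕ} (μ : Fin n → ℝ) (c p : Fin n) : ℝ :=
  if μ c = μ p then ((Finset.univ.filter fun x => μ x = μ p).card : ℝ)⁻¹ else 0

theorem auxChi_block {n : ℕ} (μ : Fin n → ℝ) (c p q : Fin n) (h : μ p = μ q) :
    auxChi μ c p = auxChi μ c q := by
  unfold auxChi
  rw [h]

theorem auxChi_sum {n : ℕ} (μ : Fin n → ℝ) (p : Fin n) : ∑ c, auxChi μ c p = 1 := by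
  unfold auxChi
  rw [← Finset.sum_filter, Finset.sum_const, nsmul_eq_mul]
  apply mul_inv_cancel₀
  have : 0 < (Finset.univ.filter fun x => μ x = μ p).card :=
    Finset.card_pos.mpr ⟨p, by simp⟩
  positivity

theorem aux_decomp {k n : ℕ} (μ : Fin n → ℝ) (T : Tensor k n) (hT : BlockConstant μ T)
    (p : Fin k → Fin n) : ∑ c : Fin k → Fin n, T c * ∏ s, auxChi μ (c s) (p s) = T p := by
  have h1 : ∀ c : Fin k → Fin n, T c * ∏ s, auxChi μ (c s) (p s)
      = T p * ∏ s, auxChi μ (c s) (p s) := by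
    intro c
    by_cases h : ∀ s, μ (c s) = μ (p s)
    · rw [hT c p h]
    · push Not at h
      obtain ⟨s, hs⟩ := h
      have : ∏ s, auxChi μ (c s) (p s) = 0 :=
        Finset.prod_eq_zero (Finset.mem_univ s) (by simp [auxChi, hs])
      simp [this]
  rw [Finset.sum_congr rfl fun c _ => h1 c, ← Finset.mul_sum]
  have h2 := Finset.prod_univ_sum (fun _ : Fin k => (Finset.univ : Finset (Fin n)))
    (fun s x => auxChi μ x (p s))
  rw [Fintype.piFinset_univ] at h2
  rw [← h2]
  simp [auxChi_sum]

theorem aux_prod_tendsto {ι : Type*} [DecidableEq ι] (S : Finset ι) (t : ℕ → ℝ)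
    (A : ℕ → ι → ℝ) (B D : ι → ℝ) (hA : ∀ s, Tendsto (fun m => A m s) atTop (nhds (B s)))
    (hD : ∀ s, Tendsto (fun m => t m * (A m s - B s)) atTop (nhds (D s))) :
    Tendsto (fun m => t m * (∏ s ∈ S, A m s - ∏ s ∈ S, B s)) atTop
      (nhds (∑ l ∈ S, D l * ∏ s ∈ S.erase l, B s)) := by
  induction S using Finset.induction_on with
  | empty => simp
  | insert a S ha ih =>
    have h1 := ((hD a).mul (tendsto_finsetProd S fun s _ => hA s)).add (ih.const_mul (B a))
    have h2 : D a * ∏ s ∈ S, B s + B a * ∑ l ∈ S, D l * ∏ s ∈ S.erase l, B s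
        = ∑ l ∈ insert a S, D l * ∏ s ∈ (insert a S).erase l, B s := by
      rw [Finset.sum_insert ha, Finset.erase_insert ha, Finset.mul_sum]
      congr 1
      refine Finset.sum_congr rfl fun l hl => ?_
      have hal : a ≠ l := fun h => ha (h ▸ hl)
      rw [Finset.erase_insert_of_ne hal, Finset.prod_insert (by simp [ha])]
      ring
    rw [h2] at h1
    refine h1.congr fun m => ?_
    rw [Finset.prod_insert ha, Finset.prod_insert ha]
    ring

theorem aux_extPerm_castSucc {k : ℕ} (σ : Equiv.Perm (Fin k)) (s : Fin k) :
    extPerm σ s.castSucc = (σ s).castSucc := by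
  simp [extPerm, Equiv.permCongr]

theorem aux_extPerm_last {k : ℕ} (σ : Equiv.Perm (Fin k)) :
    extPerm σ (Fin.last k) = Fin.last k := by
  simp [extPerm, Equiv.permCongr]

theorem aux_permIns_iff {k n : ℕ} (σ : Equiv.Perm (Fin k)) (l : Fin k) (i j : Fin k → Fin n)
    (a b : Fin n) :
    (∀ s, (Fin.snoc i a : Fin (k+1) → Fin n) s
        = (Fin.snoc j b : Fin (k+1) → Fin n) (permIns σ l.castSucc s)) ↔
      (b = i l ∧ a = j (σ l) ∧ ∀ s, s ≠ l → i s = j (σ s)) := by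
  rw [Fin.forall_fin_succ']
  have h1 : permIns σ l.castSucc (Fin.last k) = (σ l).castSucc := by
    simp [permIns, aux_extPerm_castSucc]
  have h2 : permIns σ l.castSucc l.castSucc = Fin.last k := by
    simp [permIns, aux_extPerm_last]
  have h3 : ∀ s, s ≠ l → permIns σ l.castSucc s.castSucc = (σ s).castSucc := by
    intro s hs
    have : Equiv.swap l.castSucc (Fin.last k) s.castSucc = s.castSucc :=
      Equiv.swap_apply_of_ne_of_ne (by simpa using hs) (Fin.castSucc_lt_last s).ne
    simp [permIns, this, aux_extPerm_castSucc]
  rw [h1]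
  simp only [Fin.snoc_castSucc, Fin.snoc_last]
  constructor
  · rintro ⟨hA, hB⟩
    refine ⟨?_, hB, fun s hs => ?_⟩
    · have := hA l
      rw [h2, Fin.snoc_last] at this
      exact this.symm
    · have := hA s
      rwa [h3 s hs, Fin.snoc_castSucc] at this
  · rintro ⟨hA, hB, hC⟩
    refine ⟨fun s => ?_, hB⟩
    by_cases hs : s = l
    · subst hs
      rw [h2, Fin.snoc_last, hA]
    · rw [h3 s hs, Fin.snoc_castSucc, hC s hs]

theorem aux_sum_snoc {k n : ℕ} (F : (Fin (k+1) → Fin n) → ℝ) :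
    ∑ p, F p = ∑ i : Fin k → Fin n, ∑ a : Fin n, F (Fin.snoc i a) := by
  rw [← Equiv.sum_comp (Fin.snocEquiv fun _ : Fin (k+1) => Fin n) F, Fintype.sum_prod_type,
    Finset.sum_comm]
  rfl

theorem aux_rhs {k n : ℕ} (σ : Equiv.Perm (Fin k)) (l : Fin k) (T : Tensor (k+1) n)
    (H : Fin k → Matrix (Fin n) (Fin n) ℝ) (N : Matrix (Fin n) (Fin n) ℝ) :
    apply2 (diagPerm (permIns σ l.castSucc) T) (Fin.snoc H N)
      = ∑ i : Fin k → Fin n, ∑ j : Fin k → Fin n,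
        (if ∀ s, s ≠ l → i s = j (σ s) then
          T (Fin.snoc i (j (σ l))) * N (j (σ l)) (i l) else 0) * ∏ s, H s (i s) (j s) := by
  unfold apply2
  rw [aux_sum_snoc]
  refine Finset.sum_congr rfl fun i _ => ?_
  rw [Finset.sum_congr rfl fun a _ => aux_sum_snoc _, Finset.sum_comm]
  refine Finset.sum_congr rfl fun j _ => ?_
  simp only [diagPerm, aux_permIns_iff, Fin.prod_univ_castSucc, Fin.snoc_castSucc,
    Fin.snoc_last]
  rw [Finset.sum_eq_single (j (σ l)), Finset.sum_eq_single (i l)]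
  · by_cases h : ∀ s, s ≠ l → i s = j (σ s)
    · simp only [true_and, ne_eq]
      simp only [ne_eq] at h
      rw [if_pos h, if_pos h]
      ring
    · simp [h]
  · intro b _ hb
    simp [hb]
  · simp
  · intro a _ ha
    simp [ha]
  · simp

/-- entry of the derivative of a block-constant spectral function -/
def auxD {n : ℕ} (μ : Fin n → ℝ) (N : Matrix (Fin n) (Fin n) ℝ) (f : Fin n → ℝ)
    (a b : Fin n) : ℝ :=
  if μ a = μ b then 0 else (f b - f a) / (μ b - μ a) * N a b

theorem aux_one {n : ℕ} (μ : Fin n → ℝ) (hμ : Antitone μ)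
    (L : ℕ → Fin n → ℝ) (hL : ∀ m, Antitone (L m))
    (M : ℕ → Matrix (Fin n) (Fin n) ℝ)
    (hM0 : Tendsto M atTop (nhds 0))
    (Mlim : Matrix (Fin n) (Fin n) ℝ) (t : ℕ → ℝ)
    (hMdir : Tendsto (fun m => t m • M m) atTop (nhds Mlim))
    (U : ℕ → Matrix (Fin n) (Fin n) ℝ) (hUo : ∀ m, (U m)ᵀ * U m = 1)
    (Ulim : Matrix (Fin n) (Fin n) ℝ) (hUlim : Tendsto U atTop (nhds Ulim))
    (hdec : ∀ m, Matrix.diagonal μ + M m = U m * Matrix.diagonal (L m) * (U m)ᵀ)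
    (f : Fin n → ℝ) (hf : ∀ p q, μ p = μ q → f p = f q) (a b : Fin n) :
    Tendsto (fun m => ∑ p, f p * (U m a p * U m b p)) atTop
      (nhds (if a = b then f a else 0)) ∧
    Tendsto (fun m => t m * (∑ p, f p * (U m a p * U m b p) - if a = b then f a else 0)) atTop
      (nhds (auxD μ Mlim f a b)) := by
  have hUlimo : Ulimᵀ * Ulim = 1 := by
    have h1 : Tendsto (fun m => (U m)ᵀ * U m) atTop (nhds (Ulimᵀ * Ulim)) :=
      ((continuous_id.matrix_transpose.tendsto Ulim).comp hUlim).mul hUlim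
    simp only [hUo] at h1
    exact tendsto_nhds_unique h1 tendsto_const_nhds |>.symm ▸ rfl
  have hUo' : ∀ m, U m * (U m)ᵀ = 1 := fun m => mul_eq_one_comm.mp (hUo m)
  have hUlimo' : Ulim * Ulimᵀ = 1 := mul_eq_one_comm.mp hUlimo
  have hent : ∀ i j, Tendsto (fun m => U m i j) atTop (nhds (Ulim i j)) := fun i j =>
    (continuous_id.matrix_elem i j).tendsto Ulim |>.comp hUlim
  have hDiag : ∀ m, (U m)ᵀ * (Matrix.diagonal μ + M m) * U m = Matrix.diagonal (L m) := by
    intro m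
    rw [hdec m]
    calc (U m)ᵀ * (U m * Matrix.diagonal (L m) * (U m)ᵀ) * U m
        = ((U m)ᵀ * U m) * Matrix.diagonal (L m) * ((U m)ᵀ * U m) := by
          simp only [Matrix.mul_assoc]
      _ = _ := by rw [hUo m]; simp
  have hDlim : Tendsto (fun m => Matrix.diagonal (L m)) atTop
      (nhds (Ulimᵀ * Matrix.diagonal μ * Ulim)) := by
    have h1 : Tendsto (fun m => (U m)ᵀ * (Matrix.diagonal μ + M m) * U m) atTop
        (nhds (Ulimᵀ * (Matrix.diagonal μ + 0) * Ulim)) :=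
      (((continuous_id.matrix_transpose.tendsto Ulim).comp hUlim).mul
        (tendsto_const_nhds.add hM0)).mul hUlim
    simpa only [hDiag, add_zero] using h1
  set E := Ulimᵀ * Matrix.diagonal μ * Ulim with hE
  have hEent : ∀ i j, Tendsto (fun m => Matrix.diagonal (L m) i j) atTop (nhds (E i j)) :=
    fun i j => (continuous_id.matrix_elem i j).tendsto E |>.comp hDlim
  have hLd : ∀ i, Tendsto (fun m => L m i) atTop (nhds (E i i)) := by
    intro i
    simpa using hEent i i
  have hEd : E = Matrix.diagonal (fun i => E i i) := by
    ext i j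
    by_cases hij : i = j
    · subst hij; simp
    · rw [Matrix.diagonal_apply_ne _ hij]
      have := hEent i j
      simp only [Matrix.diagonal_apply_ne _ hij] at this
      exact tendsto_nhds_unique this tendsto_const_nhds
  have hUE : Matrix.diagonal μ * Ulim = Ulim * Matrix.diagonal (fun i => E i i) := by
    rw [← hEd, hE, ← Matrix.mul_assoc, ← Matrix.mul_assoc, hUlimo', Matrix.one_mul]
  have hUE' : ∀ i j, μ i * Ulim i j = Ulim i j * E j j := by
    intro i j
    have := congrFun (congrFun hUE i) j
    simpa [Matrix.diagonal_mul, Matrix.mul_diagonal] using this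
  have hanti : Antitone (fun i => E i i) := fun i j hij =>
    le_of_tendsto_of_tendsto' (hLd j) (hLd i) fun m => hL m hij
  obtain ⟨π, hπ⟩ := aux_perm_nonzero Ulim hUlimo
  have hEμ : (fun i => E i i) = μ := by
    refine aux_antitone_perm μ _ hμ hanti π fun j => ?_
    have := hUE' (π j) j
    rw [mul_comm] at this
    exact mul_left_cancel₀ (hπ j) this
  have hLμ : ∀ i, Tendsto (fun m => L m i) atTop (nhds (μ i)) := by
    intro i
    rw [← congrFun hEμ i]
    exact hLd i
  have hUzero : ∀ i j, μ i ≠ μ j → Ulim i j = 0 := by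
    intro i j hij
    have h1 := hUE' i j
    have h2 : E j j = μ j := congrFun hEμ j
    rw [h2] at h1
    by_contra h0
    apply hij
    rw [mul_comm] at h1
    exact mul_left_cancel₀ h0 h1
  -- key asymptotics
  have hkey : ∀ m i j, (L m j - μ i) * U m i j = (M m * U m) i j := by
    intro m i j
    have h1 : (Matrix.diagonal μ + M m) * U m = U m * Matrix.diagonal (L m) := by
      rw [hdec m, Matrix.mul_assoc, hUo m, Matrix.mul_one]
    have h2 := congrFun (congrFun h1 i) j
    rw [Matrix.add_mul, Matrix.add_apply, Matrix.diagonal_mul, Matrix.mul_diagonal] at h2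
    linarith
  have hasym : ∀ i j, μ i ≠ μ j →
      Tendsto (fun m => t m * U m i j) atTop (nhds ((Mlim * Ulim) i j / (μ j - μ i))) := by
    intro i j hij
    have hne : μ j - μ i ≠ 0 := sub_ne_zero.mpr (Ne.symm hij)
    have h1 : Tendsto (fun m => ((t m • M m) * U m) i j) atTop (nhds ((Mlim * Ulim) i j)) :=
      ((continuous_id.matrix_elem i j).tendsto (Mlim * Ulim)).comp (hMdir.mul hUlim)
    have h3 : Tendsto (fun m => L m j - μ i) atTop (nhds (μ j - μ i)) :=
      (hLμ j).sub tendsto_const_nhds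
    refine (h1.div h3 hne).congr' ?_
    filter_upwards [h3.eventually_ne hne] with m hm
    change ((t m • M m) * U m) i j / (L m j - μ i) = t m * U m i j
    rw [div_eq_iff hm, Matrix.smul_mul, Matrix.smul_apply, ← hkey, smul_eq_mul]
    ring
  have horth : ∀ m, ∑ p, U m a p * U m b p = if a = b then 1 else 0 := by
    intro m
    have := congrFun (congrFun (hUo' m) a) b
    rw [Matrix.mul_apply, Matrix.one_apply] at this
    simpa using this
  have hrew : ∀ m, ∑ p, f p * (U m a p * U m b p) - (if a = b then f a else 0)
      = ∑ p, (f p - f a) * (U m a p * U m b p) := by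
    intro m
    have h1 : (if a = b then f a else 0) = f a * ∑ p, U m a p * U m b p := by
      rw [horth]; simp
    rw [h1, Finset.mul_sum, ← Finset.sum_sub_distrib]
    exact Finset.sum_congr rfl fun p _ => by ring
  constructor
  · have h1 : Tendsto (fun m => ∑ p, f p * (U m a p * U m b p)) atTop
        (nhds (∑ p, f p * (Ulim a p * Ulim b p))) :=
      tendsto_finsetSum _ fun p _ => ((hent a p).mul (hent b p)).const_mul _
    convert h1 using 2
    have h2 : ∑ p, Ulim a p * Ulim b p = if a = b then 1 else 0 := by
      have := congrFun (congrFun hUlimo' a) b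
      rw [Matrix.mul_apply, Matrix.one_apply] at this
      simpa using this
    have h3 : ∀ p, f p * (Ulim a p * Ulim b p) = f a * (Ulim a p * Ulim b p) := by
      intro p
      by_cases h : μ a = μ p
      · rw [hf a p h]
      · rw [hUzero a p h]; ring
    rw [Finset.sum_congr rfl fun p _ => h3 p, ← Finset.mul_sum, h2]
    simp
  · simp only [hrew]
    have h1 : Tendsto (fun m => ∑ p, (f p - f a) * (t m * U m a p * U m b p)) atTop
        (nhds (∑ p, if μ a = μ p then 0 else
          (f p - f a) * ((Mlim * Ulim) a p / (μ p - μ a) * Ulim b p))) := by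
      refine tendsto_finsetSum _ fun p _ => ?_
      split_ifs with h
      · simp [hf a p h]
      · exact ((hasym a p h).mul (hent b p)).const_mul _
    have h2 : (∑ p, if μ a = μ p then 0 else
          (f p - f a) * ((Mlim * Ulim) a p / (μ p - μ a) * Ulim b p)) = auxD μ Mlim f a b := by
      have h3 : ∀ p, (if μ a = μ p then 0 else
          (f p - f a) * ((Mlim * Ulim) a p / (μ p - μ a) * Ulim b p))
          = (if μ a = μ b then 0 else (f b - f a) / (μ b - μ a)) *
            ((Mlim * Ulim) a p * Ulim b p) := by
        intro p
        by_cases h : μ b = μ p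
        · rw [← h, hf b p h]
          split_ifs
          · ring
          · ring
        · rw [hUzero b p h]; simp
      rw [Finset.sum_congr rfl fun p _ => h3 p, ← Finset.mul_sum]
      have h4 : ∑ p, (Mlim * Ulim) a p * Ulim b p = Mlim a b := by
        have : (Mlim * Ulim * Ulimᵀ) a b = Mlim a b := by
          rw [Matrix.mul_assoc, hUlimo', Matrix.mul_one]
        rw [← this, Matrix.mul_apply]
        rfl
      rw [h4, auxD]
      split_ifs <;> simp
    rw [← h2]
    refine h1.congr fun m => ?_
    rw [Finset.mul_sum]
    exact Finset.sum_congr rfl fun p _ => by ring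

theorem aux_entry_limit {k n : ℕ} (μ : Fin n → ℝ) (T : Tensor k n) (hT : BlockConstant μ T)
    (N : Matrix (Fin n) (Fin n) ℝ) (hN : N.IsSymm) (σ : Equiv.Perm (Fin k))
    (i j : Fin k → Fin n) (l : Fin k) :
    ∑ c : Fin k → Fin n, T c * (auxD μ N (auxChi μ (c l)) (i l) (j (σ l)) *
        ∏ s ∈ Finset.univ.erase l, (if i s = j (σ s) then auxChi μ (c s) (i s) else 0))
      = if ∀ s, s ≠ l → i s = j (σ s) then
          outDD μ T l (Fin.snoc i (j (σ l))) * matOut μ N (j (σ l)) (i l) else 0 := by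
  split_ifs with h
  · have hp : ∀ c : Fin k → Fin n,
        ∏ s ∈ Finset.univ.erase l, (if i s = j (σ s) then auxChi μ (c s) (i s) else 0)
        = ∏ s ∈ Finset.univ.erase l, auxChi μ (c s) (i s) := fun c =>
      Finset.prod_congr rfl fun s hs => if_pos (h s (Finset.ne_of_mem_erase hs))
    simp only [hp]
    simp only [outDD, Fin.snoc_castSucc, Fin.snoc_last, auxD, matOut, matIn, Matrix.sub_apply,
      Matrix.of_apply]
    by_cases hm : μ (i l) = μ (j (σ l))
    · simp [hm]
    · simp only [if_neg hm, if_neg (Ne.symm hm), sub_zero]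
      rw [hN.apply]
      rw [← aux_decomp μ T hT (Function.update i l (j (σ l)))]
      conv_rhs => rw [← aux_decomp μ T hT i]
      rw [← Finset.sum_sub_distrib, Finset.sum_div, Finset.sum_mul]
      refine Finset.sum_congr rfl fun c _ => ?_
      rw [← Finset.mul_prod_erase Finset.univ (fun s => auxChi μ (c s) (i s)) (Finset.mem_univ l),
        ← Finset.mul_prod_erase Finset.univ
          (fun s => auxChi μ (c s) (Function.update i l (j (σ l)) s)) (Finset.mem_univ l)]
      have hq : ∏ s ∈ Finset.univ.erase l, auxChi μ (c s) (Function.update i l (j (σ l)) s)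
          = ∏ s ∈ Finset.univ.erase l, auxChi μ (c s) (i s) :=
        Finset.prod_congr rfl fun s hs => by
          rw [Function.update_of_ne (Finset.ne_of_mem_erase hs)]
      rw [hq, Function.update_self]
      ring
  · push Not at h
    obtain ⟨s, hs, hne⟩ := h
    refine Finset.sum_eq_zero fun c _ => ?_
    rw [Finset.prod_eq_zero (i := s) (by simp [hs]) (if_neg hne)]
    ring

/-- Theorem `dec14b`. With `M_m → 0` symmetric, `M_m/‖M_m‖ → M`, `μ`
nonincreasing, and orthogonal `U_m → U` satisfying
`Diag μ + M_m = U_m (Diag λ(Diag μ + M_m)) U_mᵀ`: for every `μ`-block-constant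
`k`-tensor `T`, matrices `H₁,…,H_k`, and permutation `σ` of `{1,…,k}`,
`lim_m ((U_m(Diag^σ T)U_mᵀ − Diag^σ T)/‖M_m‖)[H₁,…,H_k]
  = ∑_{l=1}^k (Diag^{σ_{(l)}} T^{(l)}_out)[H₁,…,H_k, M_out]`. -/
theorem statement9 {n k : ℕ}
    (μ : Fin n → ℝ) (hμ : Antitone μ)
    (lam : Matrix (Fin n) (Fin n) ℝ → Fin n → ℝ) (hlam : IsEigCF lam)
    (M : ℕ → Matrix (Fin n) (Fin n) ℝ) (hMsym : ∀ m, (M m).IsSymm)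
    (hM0 : Tendsto M atTop (nhds 0))
    (Mlim : Matrix (Fin n) (Fin n) ℝ)
    (hMdir : Tendsto (fun m => ‖M m‖⁻¹ • M m) atTop (nhds Mlim))
    (U : ℕ → Matrix (Fin n) (Fin n) ℝ) (hUo : ∀ m, (U m)ᵀ * U m = 1)
    (Ulim : Matrix (Fin n) (Fin n) ℝ) (hUlim : Tendsto U atTop (nhds Ulim))
    (hdec : ∀ m, Matrix.diagonal μ + M m
      = U m * Matrix.diagonal (lam (Matrix.diagonal μ + M m)) * (U m)ᵀ)
    (T : Tensor k n) (hT : BlockConstant μ T)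
    (H : Fin k → Matrix (Fin n) (Fin n) ℝ) (σ : Equiv.Perm (Fin k))
    : Tendsto
        (fun m => apply2 (‖M m‖⁻¹ • (conj2 (U m) (diagPerm σ T) - diagPerm σ T)) H)
        atTop
        (nhds (∑ l : Fin k,
          apply2 (diagPerm (permIns σ l.castSucc) (outDD μ T l))
            (Fin.snoc H (matOut μ Mlim)))) := by
  have hMlim : Mlim.IsSymm := by
    have h1 : Tendsto (fun m => (‖M m‖⁻¹ • M m)ᵀ) atTop (nhds Mlimᵀ) :=
      (continuous_id.matrix_transpose.tendsto Mlim).comp hMdir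
    have h2 : ∀ m, (‖M m‖⁻¹ • M m)ᵀ = ‖M m‖⁻¹ • M m := fun m => by
      rw [Matrix.transpose_smul, (hMsym m).eq]
    simp only [h2] at h1
    exact tendsto_nhds_unique h1 hMdir
  have hL : ∀ m, Antitone (lam (Matrix.diagonal μ + M m)) := fun m =>
    (hlam _ ((Matrix.isSymm_diagonal μ).add (hMsym m))).1
  have hone := fun f hf a b => aux_one μ hμ (fun m => lam (Matrix.diagonal μ + M m)) hL M hM0
    Mlim (fun m => ‖M m‖⁻¹) hMdir U hUo Ulim hUlim hdec f hf a b
  simp only [aux_rhs]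
  rw [Finset.sum_comm]
  simp only [apply2]
  refine tendsto_finsetSum _ fun i _ => ?_
  rw [Finset.sum_comm]
  refine tendsto_finsetSum _ fun j _ => ?_
  rw [← Finset.sum_mul]
  refine Tendsto.mul_const _ ?_
  simp only [← aux_entry_limit μ T hT Mlim hMlim σ i j]
  rw [Finset.sum_comm]
  simp only [← Finset.mul_sum]
  have hdiag : diagPerm σ T i j = ∑ c : Fin k → Fin n, T c *
      ∏ s, (if i s = j (σ s) then auxChi μ (c s) (i s) else 0) := by
    unfold diagPerm
    split_ifs with h
    · simp only [h, if_true]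
      have := aux_decomp μ T hT i
      simp only [h] at this
      rw [this]
    · push Not at h
      obtain ⟨s, hs⟩ := h
      symm
      refine Finset.sum_eq_zero fun c _ => ?_
      rw [Finset.prod_eq_zero (Finset.mem_univ s) (if_neg hs), mul_zero]
  have hconj : ∀ m, conj2 (U m) (diagPerm σ T) i j = ∑ c : Fin k → Fin n, T c *
      ∏ s, ∑ p, auxChi μ (c s) p * (U m (i s) p * U m (j (σ s)) p) := by
    intro m
    rw [aux_conj]
    have h1 : ∀ c : Fin k → Fin n,
        ∏ s, ∑ p, auxChi μ (c s) p * (U m (i s) p * U m (j (σ s)) p)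
        = ∑ p : Fin k → Fin n, ∏ s, (auxChi μ (c s) (p s) *
            (U m (i s) (p s) * U m (j (σ s)) (p s))) := by
      intro c
      have h2 := Finset.prod_univ_sum (fun _ : Fin k => (Finset.univ : Finset (Fin n)))
        (fun s p => auxChi μ (c s) p * (U m (i s) p * U m (j (σ s)) p))
      rw [Fintype.piFinset_univ] at h2
      exact h2
    simp only [h1, Finset.mul_sum]
    rw [Finset.sum_comm]
    refine Finset.sum_congr rfl fun p _ => ?_
    rw [← aux_decomp μ T hT p, Finset.sum_mul]
    refine Finset.sum_congr rfl fun c _ => ?_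
    rw [Finset.prod_mul_distrib (f := fun s => auxChi μ (c s) (p s))]
    ring
  have hfun : ∀ m, (‖M m‖⁻¹ • (conj2 (U m) (diagPerm σ T) - diagPerm σ T)) i j
      = ∑ c : Fin k → Fin n, T c * (‖M m‖⁻¹ *
        (∏ s, ∑ p, auxChi μ (c s) p * (U m (i s) p * U m (j (σ s)) p)
          - ∏ s, (if i s = j (σ s) then auxChi μ (c s) (i s) else 0))) := by
    intro m
    simp only [Pi.smul_apply, Pi.sub_apply, smul_eq_mul]
    rw [hconj, hdiag, ← Finset.sum_sub_distrib, Finset.mul_sum]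
    exact Finset.sum_congr rfl fun c _ => by ring
  simp only [hfun]
  refine tendsto_finsetSum _ fun c _ => Tendsto.const_mul _ ?_
  have hb := fun s => hone (auxChi μ (c s)) (fun p q h => auxChi_block μ (c s) p q h)
    (i s) (j (σ s))
  exact aux_prod_tendsto Finset.univ (fun m => ‖M m‖⁻¹)
    (fun m s => ∑ p, auxChi μ (c s) p * (U m (i s) p * U m (j (σ s)) p))
    (fun s => if i s = j (σ s) then auxChi μ (c s) (i s) else 0)
    (fun s => auxD μ Mlim (auxChi μ (c s)) (i s) (j (σ s)))
    (fun s => (hb s).1) (fun s => (hb s).2)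

end
end

section
/- Fix μ ∈ ℝ^n. Let T be a μ-block-constant k-tensor on ℝ^n and let U be a block-diagonal orthogonal matrix (i.e., U^{ij} = 0 whenever μ_i ≠ μ_j). Then for any permutation σ on {1,…,k}, U(Diag^σ T)Uᵀ = Diag^σ T. -/
open scoped BigOperators
open Filter Asymptotics Matrix

attribute [local instance] Matrix.normedAddCommGroup

noncomputable section

/-- Lemma `invarLem`. For a `μ`-block-constant `k`-tensor `T` and a
block-diagonal orthogonal matrix `U`, `U(Diag^σ T)Uᵀ = Diag^σ T` for every permutation
`σ` of `{1,…,k}`. -/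
theorem statement11 {n k : ℕ} (μ : Fin n → ℝ)
    (T : Tensor k n) (hT : BlockConstant μ T)
    (U : Matrix (Fin n) (Fin n) ℝ) (hU : Uᵀ * U = 1)
    (hUb : ∀ i j : Fin n, μ i ≠ μ j → U i j = 0)
    (σ : Equiv.Perm (Fin k)) :
    conj2 U (diagPerm σ T) = diagPerm σ T := by
  have hU' : U * Uᵀ = 1 := mul_eq_one_comm.mp hU
  funext i j
  have key : ∀ p : Fin k → Fin n,
      (∑ q : Fin k → Fin n, diagPerm σ T p q *
        ((∏ s, U (i s) (p s)) * ∏ s, U (j s) (q s)))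
      = T i * ∏ s, (U (i s) (p s) * U (j (σ s)) (p s)) := by
    intro p
    rw [Finset.sum_eq_single (fun s => p (σ.symm s))]
    · have h1 : diagPerm σ T p (fun s => p (σ.symm s)) = T p := by
        simp [diagPerm]
      have h2 : ∏ s, U (j s) (p (σ.symm s)) = ∏ s, U (j (σ s)) (p s) := by
        rw [← Equiv.prod_comp σ]
        simp
      rw [h1, h2, ← Finset.prod_mul_distrib]
      by_cases h : ∀ s, μ (i s) = μ (p s)
      · rw [hT i p h]
      · obtain ⟨s, hs⟩ := not_forall.mp h
        have h0 : ∏ s, (U (i s) (p s) * U (j (σ s)) (p s)) = 0 :=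
          Finset.prod_eq_zero (Finset.mem_univ s) (by rw [hUb _ _ hs, zero_mul])
        rw [h0, mul_zero, mul_zero]
    · intro q _ hq
      have : ¬ ∀ s, p s = q (σ s) := by
        intro h
        apply hq
        funext s
        rw [h]
        simp
      simp only [diagPerm, if_neg this, zero_mul]
    · intro h
      exact absurd (Finset.mem_univ _) h
  have hp : ∑ p : Fin k → Fin n, ∏ s, (U (i s) (p s) * U (j (σ s)) (p s))
      = ∏ s, (if i s = j (σ s) then (1 : ℝ) else 0) := by
    rw [← Fintype.prod_sum (fun s a => U (i s) a * U (j (σ s)) a)]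
    refine Finset.prod_congr rfl fun s _ => ?_
    have := congrFun (congrFun hU' (i s)) (j (σ s))
    rw [Matrix.mul_apply, Matrix.one_apply] at this
    simpa using this
  unfold conj2
  rw [Finset.sum_congr rfl fun p _ => key p, ← Finset.mul_sum, hp]
  unfold diagPerm
  split_ifs with h
  · rw [Finset.prod_eq_one fun s _ => if_pos (h s), mul_one]
  · obtain ⟨s, hs⟩ := not_forall.mp h
    rw [Finset.prod_eq_zero (Finset.mem_univ s) (if_neg hs), mul_zero]

end
end

section
/- Fix μ ∈ ℝ^n. Let U be a block-diagonal orthogonal matrix (U^{ij} = 0 whenever μ_i ≠ μ_j), let M be a symmetric matrix, and h ∈ ℝ^n a vector with UᵀM_in U = Diag h. Then for any μ-block-constant (k+1)-tensor T on ℝ^n, any matrices H₁,…,H_k, and any permutation σ on {1,…,k}: ⟨T[h], H̃₁ ∘_σ ⋯ ∘_σ H̃_k⟩ = ⟨T, H₁ ∘_{σ_{(k+1)}} ⋯ ∘_{σ_{(k+1)}} H_k ∘_{σ_{(k+1)}} M_in⟩, where H̃_i = UᵀH_iU. -/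
open scoped BigOperators
open Filter Asymptotics Matrix

attribute [local instance] Matrix.normedAddCommGroup

noncomputable section

lemma conj_hadamard {n k : ℕ} (μ : Fin n → ℝ)
    (U : Matrix (Fin n) (Fin n) ℝ) (hU : Uᵀ * U = 1)
    (hUb : ∀ i j : Fin n, μ i ≠ μ j → U i j = 0)
    (T : Tensor k n) (hT : BlockConstant μ T)
    (H : Fin k → Matrix (Fin n) (Fin n) ℝ) (σ : Equiv.Perm (Fin k)) :
    tdot T (hadamardProd σ (fun s => Uᵀ * H s * U)) = tdot T (hadamardProd σ H) := by
  have hU2 : U * Uᵀ = 1 := mul_eq_one_comm.mp hU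
  have hexp : ∀ i : Fin k → Fin n, hadamardProd σ (fun s => Uᵀ * H s * U) i
      = ∑ q : Fin k → Fin n, ∑ p : Fin k → Fin n, (∏ s, H s (p s) (q s)) *
          ((∏ s, U (p s) (i s)) * ∏ s, U (q (σ s)) (i s)) := by
    intro i
    unfold hadamardProd
    simp only [Matrix.mul_apply, Matrix.transpose_apply]
    rw [Fintype.prod_sum]
    refine Finset.sum_congr rfl fun q _ => ?_
    rw [Finset.prod_mul_distrib, Fintype.prod_sum, Finset.sum_mul]
    refine Finset.sum_congr rfl fun p _ => ?_
    rw [Finset.prod_mul_distrib]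
    have : ∏ s, U (q s) (i (σ⁻¹ s)) = ∏ s, U (q (σ s)) (i s) := by
      rw [← Equiv.prod_comp σ]
      simp
    rw [this]
    ring
  have hTU : ∀ p i : Fin k → Fin n, T i * ∏ s, U (p s) (i s) = T p * ∏ s, U (p s) (i s) := by
    intro p i
    by_cases hc : ∀ s, μ (i s) = μ (p s)
    · rw [hT i p hc]
    · push Not at hc
      obtain ⟨s, hs⟩ := hc
      rw [Finset.prod_eq_zero (Finset.mem_univ s) (hUb _ _ hs.symm)]
      simp
  have hδ : ∀ p q : Fin k → Fin n,
      ∑ i : Fin k → Fin n, (∏ s, U (p s) (i s)) * ∏ s, U (q (σ s)) (i s)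
        = if p = q ∘ σ then 1 else 0 := by
    intro p q
    simp only [← Finset.prod_mul_distrib]
    rw [← Fintype.prod_sum (fun s a => U (p s) a * U (q (σ s)) a)]
    have : ∀ s, ∑ a, U (p s) a * U (q (σ s)) a = if p s = q (σ s) then 1 else 0 := by
      intro s
      have := congrFun (congrFun hU2 (p s)) (q (σ s))
      simpa [Matrix.mul_apply, Matrix.one_apply] using this
    simp only [this]
    rw [Finset.prod_ite_zero]
    simp [funext_iff]
  unfold tdot
  simp only [hexp, Finset.mul_sum]
  rw [Finset.sum_comm]
  have h1 : ∀ q : Fin k → Fin n, ∑ i : Fin k → Fin n, ∑ p : Fin k → Fin n,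
      T i * ((∏ s, H s (p s) (q s)) * ((∏ s, U (p s) (i s)) * ∏ s, U (q (σ s)) (i s)))
      = T (q ∘ σ) * hadamardProd σ H (q ∘ σ) := by
    intro q
    rw [Finset.sum_comm]
    have h2 : ∀ p : Fin k → Fin n, ∑ i : Fin k → Fin n,
        T i * ((∏ s, H s (p s) (q s)) * ((∏ s, U (p s) (i s)) * ∏ s, U (q (σ s)) (i s)))
        = if p = q ∘ σ then T p * ∏ s, H s (p s) (q s) else 0 := by
      intro p
      have := congrArg (fun x => T p * (∏ s, H s (p s) (q s)) * x) (hδ p q)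
      simp only [Finset.mul_sum, mul_ite, mul_one, mul_zero] at this
      rw [← this]
      refine Finset.sum_congr rfl fun i _ => ?_
      linear_combination ((∏ s, H s (p s) (q s)) * ∏ s, U (q (σ s)) (i s)) * hTU p i
    simp only [h2]
    simp [hadamardProd]
  simp only [h1]
  exact Equiv.sum_comp (Equiv.arrowCongr σ.symm (Equiv.refl (Fin n)))
    (fun q => T q * hadamardProd σ H q)

lemma extPerm_inv_last {k : ℕ} (σ : Equiv.Perm (Fin k)) :
    (extPerm σ)⁻¹ (Fin.last k) = Fin.last k := by
  rw [Equiv.Perm.inv_eq_iff_eq]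
  simp [extPerm, Equiv.permCongr]

lemma extPerm_inv_castSucc {k : ℕ} (σ : Equiv.Perm (Fin k)) (s : Fin k) :
    (extPerm σ)⁻¹ s.castSucc = (σ⁻¹ s).castSucc := by
  rw [Equiv.Perm.inv_eq_iff_eq]
  simp [extPerm, Equiv.permCongr]

/-- Theorem `dec15a`, part 1. Fix `μ`. Let `U` be a block-diagonal
orthogonal matrix, `M` symmetric, and `h` with `UᵀM_in U = Diag h`. For any
`μ`-block-constant `(k+1)`-tensor `T`, matrices `H₁,…,H_k`, and permutation `σ`:
`⟨T[h], H̃₁ ∘_σ ⋯ ∘_σ H̃_k⟩ = ⟨T, H₁ ∘_{σ_{(k+1)}} ⋯ ∘_{σ_{(k+1)}} H_k ∘_{σ_{(k+1)}} M_in⟩`,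
where `H̃ᵢ = UᵀHᵢU` (and `σ_{(k+1)} = extPerm σ`). -/
theorem statement12 {n k : ℕ} (μ : Fin n → ℝ)
    (U : Matrix (Fin n) (Fin n) ℝ) (hU : Uᵀ * U = 1)
    (hUb : ∀ i j : Fin n, μ i ≠ μ j → U i j = 0)
    (M : Matrix (Fin n) (Fin n) ℝ) (hM : M.IsSymm)
    (h : Fin n → ℝ) (hh : Uᵀ * matIn μ M * U = Matrix.diagonal h)
    (T : Tensor (k+1) n) (hT : BlockConstant μ T)
    (H : Fin k → Matrix (Fin n) (Fin n) ℝ) (σ : Equiv.Perm (Fin k)) :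
    tdot (contract T h) (hadamardProd σ (fun s => Uᵀ * H s * U))
      = tdot T (hadamardProd (extPerm σ) (Fin.snoc H (matIn μ M))) := by
  rw [← conj_hadamard μ U hU hUb T hT _ (extPerm σ)]
  unfold tdot
  rw [← Equiv.sum_comp (Fin.snocEquiv (fun _ : Fin (k+1) => Fin n)), Fintype.sum_prod_type_right]
  refine Finset.sum_congr rfl fun p _ => ?_
  unfold contract
  rw [Finset.sum_mul]
  refine Finset.sum_congr rfl fun a _ => ?_
  simp only [hadamardProd, Fin.prod_univ_castSucc, extPerm_inv_last, extPerm_inv_castSucc]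
  simp [Fin.snocEquiv, hh]
  ring

end
end
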